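/- Let ω be a modulus of continuity of order n ∈ ℕ, let D ⊂ ℝ^d be a bounded Lipschitz domain, let K(x) = Ω(x)/|x|^d be the kernel of a homogeneous C^{n+1}-smooth Calderón–Zygmund operator, and let C₀ > 0. Then there exists a constant C such that for every f ∈ 𝒞_ω(D), every cube Q with 2Q ⊂ D, and every polynomial P_Q ∈ 𝒫_n of near best approximation with constant C₀ for f on Q, the function g(y) = ∫_{D∖2Q} K(y−u)·(f(u) − P_Q(u)) du (an absolutely convergent integral for y ∈ Q) admits a polynomial P₃ ∈ 𝒫_n with (1/|Q|)·∫_Q |g(y) − P₃(y)| dy ≤ C·ω(ℓ(Q))·(‖f‖_{ω,D} + ‖f‖_{L¹(D)}). -/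

import Mathlib

open MeasureTheory Filter Set Metric
open scoped ENNReal Topology InnerProductSpace

noncomputable section

/-- The axis-parallel closed cube in `ℝ^d` with center `x₀` and side length `l`. -/
def cube {d : ℕ} (x₀ : EuclideanSpace ℝ (Fin d)) (l : ℝ) : Set (EuclideanSpace ℝ (Fin d)) :=
  {x | ∀ i, |x i - x₀ i| ≤ l / 2}

/-- `𝒫_n`: functions on `ℝ^d` given by polynomials of total degree at most `n`. -/
def PolyLE (d n : ℕ) : Set (EuclideanSpace ℝ (Fin d) → ℝ) :=
  {P | ∃ p : MvPolynomial (Fin d) ℝ, p.totalDegree ≤ n ∧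
    ∀ x, MvPolynomial.eval (fun i => x i) p = P x}

/-- The Campanato-type Zygmund seminorm `‖f‖_{ω,D}` (valued in `ℝ≥0∞`). -/
def zygSeminorm {d : ℕ} (ω : ℝ → ℝ) (n : ℕ) (D : Set (EuclideanSpace ℝ (Fin d)))
    (f : EuclideanSpace ℝ (Fin d) → ℝ) : ℝ≥0∞ :=
  ⨆ (x₀ : EuclideanSpace ℝ (Fin d)) (l : ℝ) (_ : 0 < l) (_ : cube x₀ l ⊆ D),
    ⨅ (P : EuclideanSpace ℝ (Fin d) → ℝ) (_ : P ∈ PolyLE d n),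
      (ENNReal.ofReal (ω l * l ^ d))⁻¹ * ∫⁻ x in cube x₀ l, ENNReal.ofReal |f x - P x|

/-- The `L¹(D)` norm (valued in `ℝ≥0∞`). -/
def l1Norm {d : ℕ} (D : Set (EuclideanSpace ℝ (Fin d)))
    (f : EuclideanSpace ℝ (Fin d) → ℝ) : ℝ≥0∞ :=
  ∫⁻ x in D, ENNReal.ofReal |f x|

/-- The two regularity conditions of order `m` for a modulus of continuity:
`ω(t)/t^q` almost decreasing for some `m ≤ q < m+1`, and `ω(t)/t^r` almost
increasing for some `m-1 < r < m`. -/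
def ModulusConds (ω : ℝ → ℝ) (m : ℕ) : Prop :=
  (∃ q : ℝ, (m : ℝ) ≤ q ∧ q < (m : ℝ) + 1 ∧ ∃ C : ℝ, 0 < C ∧
      ∀ s t : ℝ, 1 < s → 0 < t → ω (s * t) ≤ C * s ^ q * ω t) ∧
  (∃ r : ℝ, (m : ℝ) - 1 < r ∧ r < (m : ℝ) ∧ ∃ C : ℝ, 0 < C ∧
      ∀ s t : ℝ, 0 < s → s < 1 → 0 < t → ω (s * t) ≤ C * s ^ r * ω t)

/-- `ω` is a modulus of continuity of order `n`: continuous, increasing, `ω(0)=0`,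
nonnegative, and `n` is the smallest positive integer satisfying the two
regularity conditions. -/
structure IsModulusOfOrder (ω : ℝ → ℝ) (n : ℕ) : Prop where
  continuousOn : ContinuousOn ω (Set.Ici 0)
  monotoneOn : MonotoneOn ω (Set.Ici 0)
  nonneg : ∀ t, 0 ≤ t → 0 ≤ ω t
  map_zero : ω 0 = 0
  npos : 0 < n
  conds : ModulusConds ω n
  minimal : ∀ m : ℕ, 0 < m → ModulusConds ω m → n ≤ m

/-- `ξ(r) = ∫_r^1 ω(t) t^{-n-1} dt`. -/
def xi (ω : ℝ → ℝ) (n : ℕ) (r : ℝ) : ℝ :=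
  ∫ t in Set.Ioc r 1, ω t / t ^ (n + 1)

/-- The associated modulus of continuity `ω̃(x) = ω(x)/max{1, ξ(x)}`. -/
def omegaTilde (ω : ℝ → ℝ) (n : ℕ) (x : ℝ) : ℝ :=
  ω x / max 1 (xi ω n x)

/-- `D ⊂ ℝ^d` is a bounded Lipschitz domain: it is open, connected, bounded, and near
every boundary point, after a rigid motion, it coincides inside an `R`-window with the
region above the graph of a Lipschitz function (with Lipschitz constant at most `δ`). -/
def IsLipschitzDomain {d : ℕ} (D : Set (EuclideanSpace ℝ (Fin d))) : Prop :=
  IsOpen D ∧ IsConnected D ∧ Bornology.IsBounded D ∧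
  ∃ δ R : ℝ, 0 < δ ∧ 0 < R ∧
    ∀ a ∈ frontier D,
      ∃ (g : EuclideanSpace ℝ (Fin d) ≃ᵢ EuclideanSpace ℝ (Fin d)) (j : Fin d)
        (A : EuclideanSpace ℝ (Fin d) → ℝ),
        g a = 0 ∧
        LipschitzWith (Real.toNNReal δ) A ∧
        (∀ x y : EuclideanSpace ℝ (Fin d), (∀ i, i ≠ j → x i = y i) → A x = A y) ∧
        (g '' D) ∩ cube 0 R = {x ∈ cube (0 : EuclideanSpace ℝ (Fin d)) R | A x < x j}

/-- `Ω` is the density of a `C^k`-smooth homogeneous Calderón–Zygmund kernel: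
homogeneous of degree `0`, `C^k` away from the origin, with zero mean on the
unit sphere. -/
structure IsCZDensity (d : ℕ) (k : ℕ∞) (Ω : EuclideanSpace ℝ (Fin d) → ℝ) : Prop where
  homog : ∀ c : ℝ, 0 < c → ∀ x : EuclideanSpace ℝ (Fin d), Ω (c • x) = Ω x
  smooth : ContDiffOn ℝ k Ω {x : EuclideanSpace ℝ (Fin d) | x ≠ 0}
  meanZero : ∫ x : Metric.sphere (0 : EuclideanSpace ℝ (Fin d)) 1,
      Ω x ∂((volume : Measure (EuclideanSpace ℝ (Fin d))).toSphere) = 0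

/-- `g = T_D f`: `g` vanishes off `D` and, for a.e. `y ∈ D`, `g y` is the principal
value `lim_{ε→0+} ∫_{x ∈ D, |y-x|>ε} f(x) K(y-x) dx` (here `f` is implicitly
multiplied by `χ_D`). -/
def IsRestrictedCZ {d : ℕ} (D : Set (EuclideanSpace ℝ (Fin d)))
    (K : EuclideanSpace ℝ (Fin d) → ℝ) (f g : EuclideanSpace ℝ (Fin d) → ℝ) : Prop :=
  (∀ y, y ∉ D → g y = 0) ∧
  ∀ᵐ y ∂(volume.restrict D),
    Tendsto (fun ε : ℝ => ∫ x in {x ∈ D | ε < dist y x}, f x * K (y - x))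
      (𝓝[>] (0 : ℝ)) (𝓝 (g y))

/-- `P` is a polynomial of near best approximation (with constant `C₀`) for `f`
on the cube with center `x₀` and side length `l`. -/
def IsNearBestApprox {d : ℕ} (ω : ℝ → ℝ) (n : ℕ) (D : Set (EuclideanSpace ℝ (Fin d)))
    (f : EuclideanSpace ℝ (Fin d) → ℝ) (C₀ : ℝ) (x₀ : EuclideanSpace ℝ (Fin d)) (l : ℝ)
    (P : EuclideanSpace ℝ (Fin d) → ℝ) : Prop :=
  P ∈ PolyLE d n ∧
    (ENNReal.ofReal (l ^ d))⁻¹ * ∫⁻ x in cube x₀ l, ENNReal.ofReal |f x - P x| ≤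
      ENNReal.ofReal (C₀ * ω l) * zygSeminorm ω n D f

/-!
Let `Q` have centre `x` and side `ℓ`. The kernel satisfies the Taylor estimate
`|K(y - u) - ∑_{k ≤ n} D^k K(x - u)(y - x)^k / k!| ≲ ℓ^{n+1} / |u - x|^{d+n+1}` for `y ∈ Q` and
`u ∉ 2Q`, and the Taylor sum is a polynomial of degree at most `n` in `y`. Integrating it against
`f - P_Q` gives `P₃`, and the error is `≲ ω(ℓ) ‖f‖` as soon as
`|f(u) - P_Q(u)| ≲ ‖f‖ ω(ℓ) (|u - x| / ℓ)^q` for almost every `u ∈ D \ 2Q`, since `q < n + 1`.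

The growth bound comes from comparing near best polynomials on neighbouring cubes. A Lipschitz
domain contains at each of its points a cone of fixed aperture and height, so one can climb from `Q`
through geometrically growing cubes up to size `|u - x|`, pass to the cone at `u`, and
descend along it to a Lebesgue point `u`; the lower exponent `r > 0` of `ω` makes the descent
summable. When `|u - x|` exceeds the height of the cones, `P_Q` and `f(u)` are compared with
`‖f‖_{L¹(D)}` instead, which is where that norm enters. If `ω` vanishes identically, then `f` is
locally a polynomial and coincides with `P_Q` on the connected set `D`.
-/

section Development

variable {d n : ℕ}

local notation "𝔼" d:max => EuclideanSpace ℝ (Fin d)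

/-! ### Cubes -/

lemma isClosed_cube (z : 𝔼 d) (l : ℝ) : IsClosed (cube z l) := by
  have : cube z l = ⋂ i, {x : 𝔼 d | |x i - z i| ≤ l / 2} := by
    ext x
    simp [cube]
  rw [this]
  exact isClosed_iInter fun i => isClosed_le (by fun_prop) (by fun_prop)

lemma measurableSet_cube (z : 𝔼 d) (l : ℝ) : MeasurableSet (cube z l) :=
  (isClosed_cube z l).measurableSet

lemma closedBall_subset_cube (z : 𝔼 d) (l : ℝ) : closedBall z (l / 2) ⊆ cube z l := fun x hx i =>
  (PiLp.norm_apply_le (x - z) i).trans (mem_closedBall_iff_norm.1 hx)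

lemma cube_subset_closedBall (z : 𝔼 d) {l : ℝ} (hl : 0 ≤ l) :
    cube z l ⊆ closedBall z (d * l) := by
  intro x hx
  rw [mem_closedBall_iff_norm]
  calc ‖x - z‖ ≤ ∑ i, ‖(x - z) i‖ := by
        rw [EuclideanSpace.norm_eq]
        refine Real.sqrt_le_iff.2 ⟨by positivity, ?_⟩
        exact Finset.sum_sq_le_sq_sum_of_nonneg fun i _ => norm_nonneg _
    _ ≤ ∑ _i : Fin d, l := Finset.sum_le_sum fun i _ => (hx i).trans (half_le_self hl)
    _ = d * l := by simp

lemma exists_cube_subset_of_isOpen {D : Set (𝔼 d)} (hD : IsOpen D) {z : 𝔼 d} (hz : z ∈ D) :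
    ∃ t, 0 < t ∧ cube z t ⊆ D := by
  obtain ⟨ε, hε, hball⟩ := nhds_basis_closedBall.mem_iff.1 (hD.mem_nhds hz)
  refine ⟨ε / (d + 1), by positivity, (cube_subset_closedBall z (by positivity)).trans
    ((closedBall_subset_closedBall ?_).trans hball)⟩
  rw [mul_div_assoc', div_le_iff₀ (by positivity)]
  linarith

lemma isCompact_cube (z : 𝔼 d) {l : ℝ} (hl : 0 ≤ l) : IsCompact (cube z l) :=
  (isCompact_closedBall z (d * l)).of_isClosed_subset (isClosed_cube z l)
    (cube_subset_closedBall z hl)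

lemma cube_subset_cube {z w : 𝔼 d} {s t : ℝ} (h : ‖z - w‖ ≤ (t - s) / 2) :
    cube z s ⊆ cube w t := fun x hx i => by
  have hzw : |z i - w i| ≤ (t - s) / 2 := (PiLp.norm_apply_le (z - w) i).trans h
  linarith [abs_sub_le (x i) (z i) (w i), hx i]

lemma mem_cube_self (z : 𝔼 d) {l : ℝ} (hl : 0 ≤ l) : z ∈ cube z l :=
  closedBall_subset_cube z l (mem_closedBall_self (by positivity))

lemma setIntegral_cube_comp_add_smul (z : 𝔼 d) {l : ℝ} (hl : 0 < l) (h : 𝔼 d → ℝ) :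
    ∫ y in cube (0 : 𝔼 d) 1, h (z + l • y) = (l ^ d)⁻¹ * ∫ x in cube z l, h x := by
  have hscale := Measure.setIntegral_comp_smul_of_pos (volume : Measure (𝔼 d))
    (fun x => h (z + x)) (cube (0 : 𝔼 d) 1) hl
  simp only [finrank_euclideanSpace, Fintype.card_fin, smul_eq_mul] at hscale
  rw [hscale, ← (measurePreserving_add_left (volume : Measure (𝔼 d)) z).setIntegral_preimage_emb
    (measurableEmbedding_addLeft z) h (cube z l)]
  congr 3
  ext x
  simp only [mem_smul_set_iff_inv_smul_mem₀ hl.ne', cube, mem_preimage, mem_ofPred_eq,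
    PiLp.smul_apply, PiLp.zero_apply, PiLp.add_apply, smul_eq_mul, sub_zero, abs_mul,
    abs_inv, abs_of_pos hl, add_sub_cancel_left, inv_mul_le_iff₀ hl, mul_one_div]

lemma volume_cube (z : 𝔼 d) {l : ℝ} (hl : 0 ≤ l) :
    volume (cube z l) = ENNReal.ofReal (l ^ d) := by
  have : cube z l = (fun x : 𝔼 d => x.ofLp) ⁻¹'
      Icc (fun i => z i - l / 2) (fun i => z i + l / 2) := by
    ext x
    simp only [cube, mem_ofPred_eq, mem_preimage, mem_Icc, Pi.le_def, ← forall_and, abs_le]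
    refine forall_congr' fun i => ?_
    constructor <;> rintro ⟨_, _⟩ <;> constructor <;> linarith
  rw [this, (PiLp.volume_preserving_ofLp (Fin d)).measure_preimage
    measurableSet_Icc.nullMeasurableSet, Real.volume_Icc_pi]
  simp [ENNReal.ofReal_pow hl]

lemma inv_volume_mul_lintegral_cube_le {G : 𝔼 d → ℝ} {z : 𝔼 d} {l B : ℝ} (hl : 0 < l)
    (hG : ∀ y ∈ cube z l, |G y| ≤ B) :
    (ENNReal.ofReal (l ^ d))⁻¹ * ∫⁻ y in cube z l, ENNReal.ofReal |G y| ≤ ENNReal.ofReal B := by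
  have hvol : ENNReal.ofReal (l ^ d) ≠ 0 := by simpa using pow_pos hl d
  calc (ENNReal.ofReal (l ^ d))⁻¹ * ∫⁻ y in cube z l, ENNReal.ofReal |G y|
      ≤ (ENNReal.ofReal (l ^ d))⁻¹ * (ENNReal.ofReal B * volume (cube z l)) := by
        gcongr
        rw [← setLIntegral_const]
        exact setLIntegral_mono measurable_const fun y hy => ENNReal.ofReal_le_ofReal (hG y hy)
    _ = ENNReal.ofReal B := by
        rw [volume_cube z hl.le, mul_comm (ENNReal.ofReal B), ← mul_assoc,
          ENNReal.inv_mul_cancel hvol ENNReal.ofReal_ne_top, one_mul]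

/-! ### Polynomials -/

/-- Evaluation of polynomials on `ℝ^d`, as a linear map into functions. -/
def polyEval (d : ℕ) : MvPolynomial (Fin d) ℝ →ₗ[ℝ] (𝔼 d → ℝ) where
  toFun p x := MvPolynomial.eval (fun i => x i) p
  map_add' p q := by ext x; simp
  map_smul' c p := by ext x; simp [MvPolynomial.smul_eval]

/-- The set `PolyLE d n` of polynomial functions, with its vector space structure. -/
def polySubmodule (d n : ℕ) : Submodule ℝ (𝔼 d → ℝ) :=
  (MvPolynomial.restrictTotalDegree (Fin d) ℝ n).map (polyEval d)

lemma mem_polySubmodule {P : 𝔼 d → ℝ} : P ∈ polySubmodule d n ↔ P ∈ PolyLE d n := by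
  simp only [polySubmodule, Submodule.mem_map, MvPolynomial.mem_restrictTotalDegree, PolyLE,
    mem_ofPred_eq]
  exact exists_congr fun p => and_congr_right fun _ => funext_iff

instance : FiniteDimensional ℝ (polySubmodule d n) := by
  unfold polySubmodule
  infer_instance

namespace PolyLE

lemma const_mem (c : ℝ) : (fun _ => c) ∈ PolyLE d n := ⟨.C c, by simp, by simp⟩

lemma zero_mem : (0 : 𝔼 d → ℝ) ∈ PolyLE d n := const_mem 0

lemma sub_mem {P Q : 𝔼 d → ℝ} (hP : P ∈ PolyLE d n) (hQ : Q ∈ PolyLE d n) : P - Q ∈ PolyLE d n :=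
  mem_polySubmodule.1 (Submodule.sub_mem _ (mem_polySubmodule.2 hP) (mem_polySubmodule.2 hQ))

lemma smul_mem (c : ℝ) {P : 𝔼 d → ℝ} (hP : P ∈ PolyLE d n) : c • P ∈ PolyLE d n :=
  mem_polySubmodule.1 (Submodule.smul_mem _ c (mem_polySubmodule.2 hP))

lemma sum_mem {ι : Type*} {s : Finset ι} {P : ι → 𝔼 d → ℝ} (hP : ∀ i ∈ s, P i ∈ PolyLE d n) :
    ∑ i ∈ s, P i ∈ PolyLE d n :=
  mem_polySubmodule.1 (Submodule.sum_mem _ fun i hi => mem_polySubmodule.2 (hP i hi))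

lemma comp_add_smul {P : 𝔼 d → ℝ} (hP : P ∈ PolyLE d n) (z : 𝔼 d) (l : ℝ) :
    (fun x => P (z + l • x)) ∈ PolyLE d n := by
  obtain ⟨p, hp, hpP⟩ := hP
  let affine (i : Fin d) : MvPolynomial (Fin d) ℝ :=
    MvPolynomial.C (z i) + MvPolynomial.C l * MvPolynomial.X i
  have h_affine (i : Fin d) : (affine i).totalDegree ≤ 1 :=
    (MvPolynomial.totalDegree_add _ _).trans
      (max_le (by simp) ((MvPolynomial.totalDegree_mul _ _).trans (by simp)))
  refine ⟨MvPolynomial.bind₁ affine p, ?_, fun x => ?_⟩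
  · rw [MvPolynomial.bind₁, MvPolynomial.aeval_def, MvPolynomial.eval₂_eq']
    refine MvPolynomial.totalDegree_finsetSum_le fun m hm => ?_
    refine (MvPolynomial.totalDegree_mul _ _).trans ?_
    rw [MvPolynomial.algebraMap_eq, MvPolynomial.totalDegree_C, zero_add]
    calc (∏ i, affine i ^ m i).totalDegree
        ≤ ∑ i, (affine i ^ m i).totalDegree := MvPolynomial.totalDegree_finsetProd _ _
      _ ≤ ∑ i, m i := Finset.sum_le_sum fun i _ => (MvPolynomial.totalDegree_pow _ _).trans
          (mul_le_of_le_one_right (Nat.zero_le _) (h_affine i))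
      _ = m.sum fun _ e => e := by rw [Finsupp.sum_fintype _ _ fun _ => rfl]
      _ ≤ n := (MvPolynomial.le_totalDegree hm).trans hp
  · simp only [← hpP]
    rw [MvPolynomial.bind₁, ← MvPolynomial.aeval_eq_eval, ← MvPolynomial.aeval_eq_eval,
      ← MvPolynomial.bind₁, MvPolynomial.aeval_bind₁]
    simp [affine]

lemma prod_coord_sub_mem {k : ℕ} (hk : k ≤ n) (σ : Fin k → Fin d) (z : 𝔼 d) :
    (fun x : 𝔼 d => ∏ i, (x (σ i) - z (σ i))) ∈ PolyLE d n := by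
  let factor (i : Fin k) : MvPolynomial (Fin d) ℝ :=
    MvPolynomial.X (σ i) - MvPolynomial.C (z (σ i))
  refine ⟨∏ i, factor i, ?_, by simp [factor]⟩
  calc (∏ i, factor i).totalDegree ≤ ∑ i, (factor i).totalDegree :=
        MvPolynomial.totalDegree_finsetProd _ _
    _ ≤ ∑ _i : Fin k, 1 := Finset.sum_le_sum fun i _ =>
        (MvPolynomial.totalDegree_sub_C_le _ _).trans (by simp)
    _ ≤ n := by simpa using hk

lemma multilinear_apply_sub_mem {k : ℕ} (hk : k ≤ n)
    (A : ContinuousMultilinearMap ℝ (fun _ : Fin k => 𝔼 d) ℝ) (z : 𝔼 d) :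
    (fun x => A fun _ => x - z) ∈ PolyLE d n := by
  let b := EuclideanSpace.basisFun (Fin d) ℝ
  have hA (v : 𝔼 d) :
      A (fun _ => v) = ∑ σ : Fin k → Fin d, A (fun i => b (σ i)) * ∏ i, v (σ i) := by
    have hv : v = ∑ j, v j • b j := by
      simpa [b] using (b.sum_repr v).symm
    conv_lhs => rw [hv]
    simp only [ContinuousMultilinearMap.map_sum, ContinuousMultilinearMap.map_smul_univ,
      smul_eq_mul]
    exact Finset.sum_congr rfl fun σ _ => mul_comm _ _
  have : (fun x => A fun _ => x - z) =
      ∑ σ : Fin k → Fin d, A (fun i => b (σ i)) • fun x : 𝔼 d => ∏ i, (x (σ i) - z (σ i)) := by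
    ext x
    simp [hA]
  rw [this]
  exact sum_mem fun σ _ => smul_mem _ (prod_coord_sub_mem hk σ z)

lemma analyticOnNhd {P : 𝔼 d → ℝ} (hP : P ∈ PolyLE d n) : AnalyticOnNhd ℝ P univ := by
  obtain ⟨p, -, hpP⟩ := hP
  rw [← funext hpP]
  exact AnalyticOnNhd.eval_continuousLinearMap
    (EuclideanSpace.equiv (Fin d) ℝ).toContinuousLinearMap p

lemma continuous {P : 𝔼 d → ℝ} (hP : P ∈ PolyLE d n) : Continuous P :=
  continuousOn_univ.1 (analyticOnNhd hP).continuousOn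

lemma integrableOn {P : 𝔼 d → ℝ} (hP : P ∈ PolyLE d n) {s : Set (𝔼 d)}
    (hs : Bornology.IsBounded s) : IntegrableOn P s :=
  ((continuous hP).continuousOn.integrableOn_compact hs.isCompact_closure).mono_set subset_closure

lemma eq_of_ae_eq_on_open {P Q : 𝔼 d → ℝ} (hP : P ∈ PolyLE d n) (hQ : Q ∈ PolyLE d n)
    {U : Set (𝔼 d)} (hU : IsOpen U) (hne : U.Nonempty) (h : P =ᵐ[volume.restrict U] Q) : P = Q := by
  obtain ⟨x, hx⟩ := hne
  refine (analyticOnNhd hP).eq_of_eventuallyEq (analyticOnNhd hQ) (z₀ := x) ?_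
  exact (Measure.eqOn_open_of_ae_eq h hU (continuous hP).continuousOn
    (continuous hQ).continuousOn).eventuallyEq_of_mem (hU.mem_nhds hx)

lemma exists_abs_le_mul_pow {P : 𝔼 d → ℝ} (hP : P ∈ PolyLE d n) :
    ∃ B, 0 ≤ B ∧ ∀ (R : ℝ) (x : 𝔼 d), 1 ≤ R → ‖x‖ ≤ R → |P x| ≤ B * R ^ n := by
  obtain ⟨p, hp, hpP⟩ := hP
  refine ⟨∑ m ∈ p.support, |p.coeff m|, by positivity, fun R x hR hx => ?_⟩
  rw [← hpP, MvPolynomial.eval_eq', Finset.sum_mul]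
  refine (Finset.abs_sum_le_sum_abs _ _).trans (Finset.sum_le_sum fun m hm => ?_)
  rw [abs_mul, Finset.abs_prod]
  gcongr
  calc ∏ i, |x i ^ m i| ≤ ∏ i, R ^ m i := by
        refine Finset.prod_le_prod (fun _ _ => abs_nonneg _) fun i _ => ?_
        rw [abs_pow]
        gcongr
        exact (PiLp.norm_apply_le x i).trans hx
    _ = R ^ m.sum fun _ e => e := by
        rw [Finset.prod_pow_eq_pow_sum, Finsupp.sum_fintype _ _ fun _ => rfl]
    _ ≤ R ^ n := pow_le_pow_right₀ hR ((MvPolynomial.le_totalDegree hm).trans hp)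

lemma integrableOn_cube_zero_one (P : polySubmodule d n) :
    IntegrableOn (P : 𝔼 d → ℝ) (cube 0 1) :=
  integrableOn (mem_polySubmodule.1 P.2) (isCompact_cube 0 zero_le_one).isBounded

/-- The class in `L¹` of the unit cube of a polynomial function. -/
def toL1 (d n : ℕ) : polySubmodule d n →ₗ[ℝ] (𝔼 d →₁[volume.restrict (cube 0 1)] ℝ) where
  toFun P := (integrableOn_cube_zero_one P).toL1 P
  map_add' _ _ := rfl
  map_smul' _ _ := rfl

lemma toL1_injective : Function.Injective (toL1 d n) := by
  intro P Q hPQ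
  have hae : (P : 𝔼 d → ℝ) =ᵐ[volume.restrict (cube 0 1)] Q :=
    (Integrable.toL1_eq_toL1_iff _ _ (integrableOn_cube_zero_one P)
      (integrableOn_cube_zero_one Q)).1 hPQ
  have hball : ball (0 : 𝔼 d) (1 / 2) ⊆ cube 0 1 :=
    ball_subset_closedBall.trans (closedBall_subset_cube 0 1)
  exact Subtype.ext <| eq_of_ae_eq_on_open (mem_polySubmodule.1 P.2) (mem_polySubmodule.1 Q.2)
    isOpen_ball (nonempty_ball.2 (by norm_num)) (ae_restrict_of_ae_restrict_of_subset hball hae)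

lemma norm_toL1 (P : polySubmodule d n) :
    ‖toL1 d n P‖ = ∫ y in cube (0 : 𝔼 d) 1, |(P : 𝔼 d → ℝ) y| :=
  L1.norm_of_fun_eq_integral_norm (integrableOn_cube_zero_one P)

lemma exists_abs_le_integral_cube_zero_one (d n : ℕ) :
    ∃ A, 0 ≤ A ∧ ∀ P ∈ PolyLE d n, ∀ (R : ℝ) (x : 𝔼 d), 1 ≤ R → ‖x‖ ≤ R →
      |P x| ≤ A * R ^ n * ∫ y in cube (0 : 𝔼 d) 1, |P y| := by
  let b := Module.finBasis ℝ (polySubmodule d n)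
  choose B hB₀ hB using fun k => exists_abs_le_mul_pow (mem_polySubmodule.1 (b k).2)
  obtain ⟨A, -, hA⟩ := (toL1 d n ∘ₗ b.equivFun.symm.toLinearMap).exists_antilipschitzWith
    (LinearMap.ker_eq_bot.2 (toL1_injective.comp b.equivFun.symm.injective))
  refine ⟨(∑ k, B k) * A, mul_nonneg (Finset.sum_nonneg fun k _ => hB₀ k) A.2,
    fun P hP R x hR hx => ?_⟩
  let Q : polySubmodule d n := ⟨P, mem_polySubmodule.2 hP⟩
  have hcoord : ‖b.equivFun Q‖ ≤ A * ∫ y in cube (0 : 𝔼 d) 1, |P y| := by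
    simpa [norm_toL1] using hA.le_mul_norm (map_zero _) (b.equivFun Q)
  have hexpand : P x = ∑ k, b.equivFun Q k * (b k : 𝔼 d → ℝ) x := by
    have := congrFun (congrArg Subtype.val (b.sum_equivFun Q)) x
    simpa only [Submodule.coe_sum, Submodule.coe_smul, Finset.sum_apply, Pi.smul_apply,
      smul_eq_mul] using this.symm
  calc |P x| ≤ ∑ k, ‖b.equivFun Q‖ * (B k * R ^ n) := by
        rw [hexpand]
        refine (Finset.abs_sum_le_sum_abs _ _).trans (Finset.sum_le_sum fun k _ => ?_)
        rw [abs_mul]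
        exact mul_le_mul (norm_le_pi_norm (b.equivFun Q) k) (hB k R x hR hx) (abs_nonneg _)
          (norm_nonneg _)
    _ = (∑ k, B k) * R ^ n * ‖b.equivFun Q‖ := by
        rw [← Finset.mul_sum, ← Finset.sum_mul]
        ring
    _ ≤ (∑ k, B k) * R ^ n * (A * ∫ y in cube (0 : 𝔼 d) 1, |P y|) := by
        have := Finset.sum_nonneg fun k (_ : k ∈ Finset.univ) => hB₀ k
        gcongr
    _ = _ := by ring

lemma exists_abs_le_integral_cube (d n : ℕ) :
    ∃ A, 0 ≤ A ∧ ∀ P ∈ PolyLE d n, ∀ (z x : 𝔼 d) (l R : ℝ), 0 < l → l ≤ R → ‖x - z‖ ≤ R →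
      |P x| ≤ A * (R / l) ^ n * ((l ^ d)⁻¹ * ∫ y in cube z l, |P y|) := by
  obtain ⟨A, hA₀, hA⟩ := exists_abs_le_integral_cube_zero_one d n
  refine ⟨A, hA₀, fun P hP z x l R hl hlR hx => ?_⟩
  have hscaled := hA _ (comp_add_smul hP z l) (R / l) (l⁻¹ • (x - z)) ((one_le_div hl).2 hlR) (by
    rw [norm_smul, norm_inv, Real.norm_of_nonneg hl.le, inv_mul_eq_div]
    gcongr)
  rw [setIntegral_cube_comp_add_smul z hl fun x => |P x|] at hscaled
  simpa [smul_smul, hl.ne'] using hscaled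

end PolyLE

/-! ### Homogeneous kernels -/

lemma iteratedFDeriv_comp_dilation {E F : Type*} [NormedAddCommGroup E] [NormedSpace ℝ E]
    [NormedAddCommGroup F] [NormedSpace ℝ F] (f : E → F) {c : ℝ} (hc : c ≠ 0) (k : ℕ) (x : E) :
    iteratedFDeriv ℝ k (fun y => f (c • y)) x = c ^ k • iteratedFDeriv ℝ k f (c • x) := by
  let dilation : E ≃L[ℝ] E := ContinuousLinearEquiv.smulLeft (Units.mk0 c hc)
  have hchain := dilation.iteratedFDerivWithin_comp_right f uniqueDiffOn_univ
    (mem_univ (dilation x)) k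
  rw [preimage_univ, iteratedFDerivWithin_univ, iteratedFDerivWithin_univ] at hchain
  refine hchain.trans (ContinuousMultilinearMap.ext fun v => ?_)
  exact ((iteratedFDeriv ℝ k f (c • x)).map_smul_univ (fun _ => c) v).trans (by simp)

/-- The Taylor polynomial of degree `n` of `K` at `w`, evaluated at the increment `h`. -/
def taylorSum (n : ℕ) (K : 𝔼 d → ℝ) (w h : 𝔼 d) : ℝ :=
  ∑ k ∈ Finset.range (n + 1), (k.factorial : ℝ)⁻¹ * iteratedFDeriv ℝ k K w fun _ => h

/-- A kernel on `ℝ^d` that is homogeneous of degree `-d` and `C^{n+1}` away from the origin. -/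
structure IsHomogeneousKernel (n : ℕ) (K : 𝔼 d → ℝ) : Prop where
  homog : ∀ c : ℝ, 0 < c → ∀ x, K (c • x) = (c ^ d)⁻¹ * K x
  contDiffAt : ∀ x, x ≠ 0 → ContDiffAt ℝ (n + 1) K x

lemma IsCZDensity.isHomogeneousKernel {Ω : 𝔼 d → ℝ} (hΩ : IsCZDensity d ((n : ℕ∞) + 1) Ω) :
    IsHomogeneousKernel n fun x => Ω x / ‖x‖ ^ d where
  homog c hc x := by
    simp only [hΩ.homog c hc, norm_smul, Real.norm_of_nonneg hc.le, mul_pow]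
    field_simp
  contDiffAt x hx := by
    have hΩx : ContDiffAt ℝ (n + 1) Ω x := mod_cast hΩ.smooth.contDiffAt (isOpen_ne.mem_nhds hx)
    exact hΩx.div ((contDiffAt_norm ℝ hx).pow d) (by positivity)

namespace IsHomogeneousKernel

variable {K : 𝔼 d → ℝ}

lemma continuousAt_iteratedFDeriv (hK : IsHomogeneousKernel n K) {k : ℕ} (hk : k ≤ n + 1)
    {x : 𝔼 d} (hx : x ≠ 0) : ContinuousAt (iteratedFDeriv ℝ k K) x :=
  ((hK.contDiffAt x hx).iteratedFDeriv_right (i := k) (m := 0)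
    (by rw [zero_add]; exact_mod_cast hk)).continuousAt

lemma iteratedFDeriv_smul (hK : IsHomogeneousKernel n K) {k : ℕ} (hk : k ≤ n + 1) {c : ℝ}
    (hc : 0 < c) {x : 𝔼 d} (hx : x ≠ 0) :
    iteratedFDeriv ℝ k K (c • x) = (c ^ (d + k))⁻¹ • iteratedFDeriv ℝ k K x := by
  have hcomp : (fun y => K (c • y)) = (c ^ d)⁻¹ • K := funext (hK.homog c hc)
  have hchain := iteratedFDeriv_comp_dilation K hc.ne' k x
  rw [hcomp, iteratedFDeriv_const_smul_apply
    ((hK.contDiffAt x hx).of_le (by exact_mod_cast hk))] at hchain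
  rw [eq_inv_smul_iff₀ (by positivity), pow_add, mul_smul, ← hchain, smul_inv_smul₀ (by positivity)]

lemma exists_norm_iteratedFDeriv_le (hK : IsHomogeneousKernel n K) {k : ℕ} (hk : k ≤ n + 1) :
    ∃ C, 0 ≤ C ∧ ∀ x ≠ 0, ‖iteratedFDeriv ℝ k K x‖ ≤ C * (‖x‖ ^ (d + k))⁻¹ := by
  obtain ⟨C, hC⟩ := (isCompact_sphere (0 : 𝔼 d) 1).exists_bound_of_continuousOn
    fun x hx => (hK.continuousAt_iteratedFDeriv hk
      (ne_zero_of_mem_unit_sphere ⟨x, hx⟩)).continuousWithinAt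
  refine ⟨|C|, abs_nonneg C, fun x hx => ?_⟩
  have hdir : ‖x‖⁻¹ • x ∈ sphere (0 : 𝔼 d) 1 := by simp [norm_smul, hx]
  have hscale := hK.iteratedFDeriv_smul hk (norm_pos_iff.2 hx)
    (ne_zero_of_mem_unit_sphere ⟨_, hdir⟩)
  rw [smul_inv_smul₀ (norm_ne_zero_iff.2 hx)] at hscale
  rw [hscale, norm_smul, Real.norm_of_nonneg (by positivity), mul_comm]
  gcongr
  exact (hC _ hdir).trans (le_abs_self C)

lemma exists_abs_sub_taylorSum_le (hK : IsHomogeneousKernel n K) :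
    ∃ C, 0 ≤ C ∧ ∀ (w h : 𝔼 d) (m : ℝ), 0 < m → (∀ t ∈ Icc (0 : ℝ) 1, m ≤ ‖w + t • h‖) →
      |K (w + h) - taylorSum n K w h| ≤ C * (m ^ (d + (n + 1)))⁻¹ * ‖h‖ ^ (n + 1) := by
  obtain ⟨C, hC₀, hC⟩ := hK.exists_norm_iteratedFDeriv_le le_rfl
  refine ⟨C, hC₀, fun w h m hm hseg => ?_⟩
  have hne (t : ℝ) (ht : t ∈ Icc (0 : ℝ) 1) : w + t • h ≠ 0 :=
    norm_pos_iff.1 (hm.trans_le (hseg t ht))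
  have hremainder (t : ℝ) (ht : t ∈ uIoc (0 : ℝ) 1) :
      ‖(1 - t) ^ n • iteratedFDeriv ℝ (n + 1) K (w + t • h) fun _ => h‖ ≤
        C * (m ^ (d + (n + 1)))⁻¹ * ‖h‖ ^ (n + 1) := by
    rw [uIoc_of_le zero_le_one] at ht
    have htI : t ∈ Icc (0 : ℝ) 1 := Ioc_subset_Icc_self ht
    have hweight : ‖(1 - t) ^ n‖ ≤ 1 := by
      rw [norm_pow, Real.norm_of_nonneg (by linarith [ht.2])]
      exact pow_le_one₀ (by linarith [ht.2]) (by linarith [ht.1])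
    have hderiv : ‖iteratedFDeriv ℝ (n + 1) K (w + t • h)‖ ≤ C * (m ^ (d + (n + 1)))⁻¹ := by
      refine (hC _ (hne t htI)).trans ?_
      gcongr
      exact hseg t htI
    have happly := (iteratedFDeriv ℝ (n + 1) K (w + t • h)).le_opNorm fun _ => h
    rw [Fin.prod_const] at happly
    rw [norm_smul]
    refine (mul_le_of_le_one_left (norm_nonneg _) hweight).trans (happly.trans ?_)
    gcongr
  have htaylor := map_add_eq_sum_add_integral_iteratedFDeriv (n := n)
    fun t ht => hK.contDiffAt _ (hne t ht)
  simp only [smul_eq_mul] at htaylor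
  rw [htaylor, taylorSum, add_sub_cancel_left, abs_mul, abs_of_nonneg (by positivity)]
  have hfactorial : (n.factorial : ℝ)⁻¹ ≤ 1 :=
    inv_le_one_of_one_le₀ (mod_cast n.factorial_pos)
  refine (mul_le_of_le_one_left (abs_nonneg _) hfactorial).trans ?_
  simpa using intervalIntegral.norm_integral_le_of_norm_le_const hremainder

end IsHomogeneousKernel

/-! ### Moduli of power growth -/

/-- A nonnegative monotone `ω` such that `ω(t) / t ^ q` is almost decreasing and `ω(t) / t ^ r` is
almost increasing on `(0, ∞)`, with `n < q < n + 1` and `0 < r`. The strict bounds on the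
exponents make sums over geometric scales converge. -/
structure IsPowerModulus (ω : ℝ → ℝ) (n : ℕ) (q r C : ℝ) : Prop where
  mono : ∀ ⦃s t⦄, 0 < s → s ≤ t → ω s ≤ ω t
  nonneg : ∀ ⦃t⦄, 0 < t → 0 ≤ ω t
  lt_q : (n : ℝ) < q
  q_lt : q < n + 1
  r_pos : 0 < r
  C_nonneg : 0 ≤ C
  le_dilate : ∀ ⦃l t⦄, 0 < l → l ≤ t → ω t ≤ C * (t / l) ^ q * ω l
  le_contract : ∀ ⦃s t⦄, 0 < s → s ≤ 1 → 0 < t → ω (s * t) ≤ C * s ^ r * ω t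

lemma IsModulusOfOrder.exists_isPowerModulus {ω : ℝ → ℝ} (hω : IsModulusOfOrder ω n) :
    ∃ q r C, IsPowerModulus ω n q r C := by
  obtain ⟨⟨q, hnq, hqn, C, hC, hdilate⟩, r, hnr, -, C', hC', hcontract⟩ := hω.conds
  have hn : (1 : ℝ) ≤ n := by exact_mod_cast hω.npos
  have hC1 : 1 ≤ 1 + C + C' := by linarith
  refine ⟨(q + n + 1) / 2, r, 1 + C + C',
    ⟨fun s t hs hst => hω.monotoneOn hs.le (hs.le.trans hst) hst, fun t ht => hω.nonneg t ht.le,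
      by linarith, by linarith, by linarith, by linarith, fun l t hl hlt => ?_,
      fun s t hs hs1 ht => ?_⟩⟩
  · have hωl := hω.nonneg l hl.le
    obtain rfl | hlt := hlt.eq_or_lt
    · rw [div_self hl.ne', Real.one_rpow, mul_one]
      exact le_mul_of_one_le_left hωl hC1
    have hone : 1 < t / l := (one_lt_div hl).2 hlt
    calc ω t = ω (t / l * l) := by rw [div_mul_cancel₀ _ hl.ne']
      _ ≤ C * (t / l) ^ q * ω l := hdilate _ _ hone hl
      _ ≤ (1 + C + C') * (t / l) ^ ((q + n + 1) / 2) * ω l := by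
        gcongr
        · linarith
        · exact hone.le
        · linarith
  · have hωt := hω.nonneg t ht.le
    obtain rfl | hs1 := hs1.eq_or_lt
    · rw [Real.one_rpow, mul_one, one_mul]
      exact le_mul_of_one_le_left hωt hC1
    · refine (hcontract s t hs hs1 ht).trans ?_
      gcongr
      linarith

lemma IsPowerModulus.pos_or_eq_zero {ω : ℝ → ℝ} {q r C : ℝ} (hω : IsPowerModulus ω n q r C) :
    (∀ t, 0 < t → 0 < ω t) ∨ ∀ t, 0 < t → ω t = 0 := by
  by_contra! ⟨⟨l, hl, hωl⟩, t, ht, hωt⟩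
  have hωl0 : ω l = 0 := le_antisymm hωl (hω.nonneg hl)
  refine hωt (le_antisymm ?_ (hω.nonneg ht))
  calc ω t ≤ ω (max l t) := hω.mono ht (le_max_right _ _)
    _ ≤ C * (max l t / l) ^ q * ω l := hω.le_dilate hl (le_max_left _ _)
    _ = 0 := by rw [hωl0, mul_zero]

/-! ### The interior cone condition -/

/-- The two-point interior cone condition: two points of `D` at distance less than `T` are vertices
of parallel truncated cones contained in `D`. The cone with vertex `x` and axis `e` is encoded by
the cubes of side `t` centred at `x + t • e`, for `0 < t ≤ T`. -/
structure HasCones (D : Set (𝔼 d)) (L T : ℝ) : Prop where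
  one_le : 1 ≤ L
  pos : 0 < T
  exists_axis : ∀ x ∈ D, ∀ u ∈ D, dist x u < T → ∃ e : 𝔼 d, ‖e‖ ≤ L ∧
    ∀ t, 0 < t → t ≤ T → cube (x + t • e) t ⊆ D ∧ cube (u + t • e) t ⊆ D

lemma ball_subset_of_forall_mem_frontier_le_dist {X : Type*} [NormedAddCommGroup X]
    [NormedSpace ℝ X] {D : Set X} (hD : IsOpen D) {x : X} (hx : x ∈ D) {ε : ℝ} (hε : 0 < ε)
    (hfar : ∀ a ∈ frontier D, ε ≤ dist x a) : ball x ε ⊆ D := by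
  refine (convex_ball x ε).isPreconnected.subset_of_closure_inter_subset hD
    ⟨x, mem_ball_self hε, hx⟩ ?_
  rintro a ⟨haD, hax⟩
  by_contra ha
  have := hfar a ⟨haD, by rwa [hD.interior_eq]⟩
  exact (mem_ball'.1 hax).not_ge this

lemma lt_coord_of_mem_closedBall_add_single {A : 𝔼 d → ℝ} {δ κ τ : ℝ} {j : Fin d} {p w : 𝔼 d}
    (hA : LipschitzWith δ.toNNReal A) (hAj : ∀ x y : 𝔼 d, (∀ i, i ≠ j → x i = y i) → A x = A y)
    (hδ : 0 ≤ δ) (hκ : κ * (1 + δ) ≤ 1) (hτ : 0 ≤ τ) (hp : A p < p j)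
    (hw : w ∈ closedBall (p + EuclideanSpace.single j τ) (κ * τ)) : A w < w j := by
  have hAp : A (p + EuclideanSpace.single j τ) = A p := hAj _ _ fun i hi => by simp [hi]
  have hAw : A w ≤ A p + δ * (κ * τ) := by
    have hdist := hA.dist_le_mul w (p + EuclideanSpace.single j τ)
    rw [hAp, Real.dist_eq, Real.coe_toNNReal δ hδ] at hdist
    linarith [le_abs_self (A w - A p), mul_le_mul_of_nonneg_left (mem_closedBall.1 hw) hδ]
  have hwj : p j + τ - κ * τ ≤ w j := by
    have hcoord := (PiLp.norm_apply_le _ j).trans (mem_closedBall_iff_norm.1 hw)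
    have := (abs_le.1 hcoord).1
    simp only [PiLp.sub_apply, PiLp.add_apply, PiLp.single_apply, if_true] at this
    linarith
  linarith [mul_le_mul_of_nonneg_right hκ hτ]

lemma exists_axis_of_graph_chart {D : Set (𝔼 d)} {δ R κ : ℝ} {g : 𝔼 d ≃ᵢ 𝔼 d} {j : Fin d}
    {A : 𝔼 d → ℝ} (hA : LipschitzWith δ.toNNReal A)
    (hAj : ∀ x y : 𝔼 d, (∀ i, i ≠ j → x i = y i) → A x = A y)
    (hgD : g '' D ∩ cube 0 R = {x ∈ cube (0 : 𝔼 d) R | A x < x j})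
    (hδ : 0 ≤ δ) (hκ : κ * (1 + δ) ≤ 1) (hκ1 : κ ≤ 1) :
    ∃ e : 𝔼 d, ‖e‖ = 1 ∧ ∀ p ∈ D, ‖g p‖ ≤ R / 4 → ∀ τ, 0 ≤ τ → τ ≤ R / 8 →
      closedBall (p + τ • e) (κ * τ) ⊆ D := by
  set G := g.toRealAffineIsometryEquiv
  refine ⟨G.linearIsometryEquiv.symm (EuclideanSpace.single j 1), by simp,
    fun p hp hgp τ hτ hτR y hy => ?_⟩
  have hgy : g y ∈ closedBall (g p + EuclideanSpace.single j τ) (κ * τ) := by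
    have hmap : g (p + τ • G.linearIsometryEquiv.symm (EuclideanSpace.single j 1)) =
        g p + EuclideanSpace.single j τ := by
      have hsingle : EuclideanSpace.single j τ = τ • EuclideanSpace.single j (1 : ℝ) := by
        ext i
        simp
      have := G.map_vadd p (τ • G.linearIsometryEquiv.symm (EuclideanSpace.single j 1))
      rw [map_smul, LinearIsometryEquiv.apply_symm_apply, vadd_eq_add, vadd_eq_add, add_comm,
        add_comm _ (G p)] at this
      simpa [G, hsingle] using this
    rwa [mem_closedBall, ← hmap, g.dist_eq, ← mem_closedBall]
  have hmem : g p ∈ g '' D ∩ cube 0 R :=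
    ⟨mem_image_of_mem g hp, closedBall_subset_cube 0 R <| mem_closedBall_zero_iff.2 <|
      hgp.trans (by linarith)⟩
  have hwindow : g y ∈ cube 0 R := by
    refine closedBall_subset_cube 0 R (mem_closedBall_zero_iff.2 ?_)
    have h1 := norm_le_norm_add_norm_sub' (g y) (g p + EuclideanSpace.single j τ)
    have h2 := norm_add_le (g p) (EuclideanSpace.single j τ)
    have h3 : ‖EuclideanSpace.single j τ‖ = τ := by simp [hτ]
    linarith [mem_closedBall_iff_norm.1 hgy, mul_le_mul_of_nonneg_right hκ1 hτ]
  have hgyD : g y ∈ g '' D ∩ cube 0 R := by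
    rw [hgD] at hmem ⊢
    exact ⟨hwindow, lt_coord_of_mem_closedBall_add_single hA hAj hδ hκ hτ hmem.2 hgy⟩
  exact g.injective.mem_set_image.1 hgyD.1

lemma cube_add_smul_subset {D : Set (𝔼 d)} {e p : 𝔼 d} {L κ t : ℝ} (ht : 0 < t) (hκL : d ≤ κ * L)
    (h : closedBall (p + (L * t) • e) (κ * (L * t)) ⊆ D) : cube (p + t • (L • e)) t ⊆ D := by
  rw [smul_smul, mul_comm t]
  refine (cube_subset_closedBall _ ht.le).trans ((closedBall_subset_closedBall ?_).trans h)
  rw [← mul_assoc]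
  gcongr

theorem IsLipschitzDomain.exists_hasCones {D : Set (𝔼 d)} (hD : IsLipschitzDomain D) :
    ∃ L T, HasCones D L T := by
  obtain ⟨hopen, -, -, δ, R, hδ, hR, hchart⟩ := hD
  set κ : ℝ := (1 + δ)⁻¹
  set L : ℝ := (d + 1) * (1 + δ) with hL
  have hκ1 : κ ≤ 1 := inv_le_one_of_one_le₀ (by linarith)
  have hκδ : κ * (1 + δ) = 1 := inv_mul_cancel₀ (by positivity)
  have hκL : κ * L = d + 1 := by rw [hL, mul_left_comm, hκδ, mul_one]
  have hL1 : 1 ≤ L := by nlinarith [(Nat.cast_nonneg d : (0 : ℝ) ≤ d)]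
  have hL0 : 0 < L := by linarith
  refine ⟨L, R / (32 * L), hL1, by positivity, fun x hx u hu hxu => ?_⟩
  have hxu' : dist x u < R / 32 := hxu.trans_le (by gcongr; linarith)
  have htL {t : ℝ} (ht : t ≤ R / (32 * L)) : L * t ≤ R / 32 := by
    rw [le_div_iff₀ (by positivity)] at ht
    linarith
  by_cases hnear : ∃ a ∈ frontier D, dist x a < R / 8
  · obtain ⟨a, ha, hxa⟩ := hnear
    obtain ⟨g, j, A, hga, hA, hAj, hgD⟩ := hchart a ha
    obtain ⟨e, he, hcone⟩ := exists_axis_of_graph_chart hA hAj hgD hδ.le hκδ.le hκ1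
    have hnorm (p : 𝔼 d) : ‖g p‖ = dist p a := by rw [← g.dist_eq, hga, dist_zero_right]
    refine ⟨L • e, by simp [norm_smul, he, abs_of_pos hL0], fun t ht htT => ?_⟩
    have hcube (p : 𝔼 d) (hp : p ∈ D) (hpa : dist p a ≤ R / 4) : cube (p + t • L • e) t ⊆ D :=
      cube_add_smul_subset ht (by linarith)
        (hcone p hp ((hnorm p).trans_le hpa) _ (by positivity) (by linarith [htL htT]))
    exact ⟨hcube x hx (by linarith), hcube u hu (by linarith [dist_triangle_left u a x])⟩
  · push Not at hnear
    have hball := ball_subset_of_forall_mem_frontier_le_dist hopen hx (by positivity) hnear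
    refine ⟨0, by simpa using hL0.le, fun t ht htT => ?_⟩
    have hcube (p : 𝔼 d) (hxp : dist x p < R / 32) : cube (p + t • (0 : 𝔼 d)) t ⊆ D := by
      rw [← smul_zero L]
      refine cube_add_smul_subset ht (by linarith : (d : ℝ) ≤ κ * L) (fun y hy => hball ?_)
      rw [smul_zero, add_zero, mem_closedBall] at hy
      rw [mem_ball]
      have : κ * (L * t) ≤ L * t := mul_le_of_le_one_left (by positivity) hκ1
      linarith [dist_triangle_right y x p, htL htT]
    exact ⟨hcube x (by simpa using by positivity), hcube u hxu'⟩

/-! ### Local polynomial approximation -/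

/-- The polynomial `P` of degree at most `n` approximates `f` on the cube of centre `z` and
side `t > 0` with mean error at most `E`. -/
structure IsApproxOn (n : ℕ) (f : 𝔼 d → ℝ) (E : ℝ) (z : 𝔼 d) (t : ℝ) (P : 𝔼 d → ℝ) : Prop where
  mem : P ∈ PolyLE d n
  side_pos : 0 < t
  integrableOn : IntegrableOn f (cube z t)
  integral_le : ∫ y in cube z t, |f y - P y| ≤ E * t ^ d

namespace IsApproxOn

variable {f P P₁ P₂ : 𝔼 d → ℝ} {E E₁ E₂ t t₁ t₂ : ℝ} {z z₁ z₂ : 𝔼 d}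

lemma integrableOn_abs_sub (h : IsApproxOn n f E z t P) :
    IntegrableOn (fun y => |f y - P y|) (cube z t) :=
  (h.integrableOn.sub
    (PolyLE.integrableOn h.mem (isCompact_cube z h.side_pos.le).isBounded)).abs

lemma error_nonneg (h : IsApproxOn n f E z t P) : 0 ≤ E := by
  have hnonneg := (integral_nonneg fun y => abs_nonneg (f y - P y)).trans h.integral_le
  exact nonneg_of_mul_nonneg_left hnonneg (pow_pos h.side_pos d)

lemma mono (h : IsApproxOn n f E₁ z t P) (hE : E₁ ≤ E₂) : IsApproxOn n f E₂ z t P where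
  __ := h
  integral_le := h.integral_le.trans <|
    mul_le_mul_of_nonneg_right hE (pow_nonneg h.side_pos.le d)

lemma integral_abs_sub_le_add (h₁ : IsApproxOn n f E₁ z₁ t₁ P₁) (h₂ : IsApproxOn n f E₂ z₂ t₂ P₂)
    {s : Set (𝔼 d)} (hs₁ : s ⊆ cube z₁ t₁) (hs₂ : s ⊆ cube z₂ t₂) :
    ∫ y in s, |P₁ y - P₂ y| ≤ E₁ * t₁ ^ d + E₂ * t₂ ^ d := by
  have int₁ := h₁.integrableOn_abs_sub
  have int₂ := h₂.integrableOn_abs_sub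
  calc ∫ y in s, |P₁ y - P₂ y| ≤ ∫ y in s, (|f y - P₁ y| + |f y - P₂ y|) := by
        refine integral_mono_of_nonneg (ae_of_all _ fun _ => abs_nonneg _)
          ((int₁.mono_set hs₁).add (int₂.mono_set hs₂)) (ae_of_all _ fun y => ?_)
        simpa [abs_sub_comm (P₁ y)] using abs_sub_le (P₁ y) (f y) (P₂ y)
    _ = (∫ y in s, |f y - P₁ y|) + ∫ y in s, |f y - P₂ y| :=
        integral_add (int₁.mono_set hs₁) (int₂.mono_set hs₂)
    _ ≤ (∫ y in cube z₁ t₁, |f y - P₁ y|) + ∫ y in cube z₂ t₂, |f y - P₂ y| :=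
        add_le_add
          (setIntegral_mono_set int₁ (ae_of_all _ fun _ => abs_nonneg _) hs₁.eventuallyLE)
          (setIntegral_mono_set int₂ (ae_of_all _ fun _ => abs_nonneg _) hs₂.eventuallyLE)
    _ ≤ E₁ * t₁ ^ d + E₂ * t₂ ^ d := add_le_add h₁.integral_le h₂.integral_le

lemma exists_abs_sub_le (d n : ℕ) {a B : ℝ} (ha : 0 < a) (haB : a ≤ B) : ∃ C, 0 ≤ C ∧
    ∀ {f P₁ P₂ : 𝔼 d → ℝ} {E₁ E₂ t₁ t₂ t R : ℝ} {z₁ z₂ z v : 𝔼 d},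
      IsApproxOn n f E₁ z₁ t₁ P₁ → IsApproxOn n f E₂ z₂ t₂ P₂ → t₁ ≤ t → t₂ ≤ t →
      cube z (a * t) ⊆ cube z₁ t₁ → cube z (a * t) ⊆ cube z₂ t₂ → t ≤ R → ‖v - z‖ ≤ B * R →
      |P₁ v - P₂ v| ≤ C * (R / t) ^ n * (E₁ + E₂) := by
  obtain ⟨A, hA, hPoly⟩ := PolyLE.exists_abs_le_integral_cube d n
  have hB : 0 < B := ha.trans_le haB
  refine ⟨A * (B / a) ^ n * (a ^ d)⁻¹, by positivity, ?_⟩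
  intro f P₁ P₂ E₁ E₂ t₁ t₂ t R z₁ z₂ z v h₁ h₂ ht₁ ht₂ hz₁ hz₂ htR hv
  have ht : 0 < t := h₁.side_pos.trans_le ht₁
  have hR : 0 < R := ht.trans_le htR
  have hE₁ := h₁.error_nonneg
  have hE₂ := h₂.error_nonneg
  have hint : ∫ y in cube z (a * t), |P₁ y - P₂ y| ≤ (E₁ + E₂) * t ^ d :=
    calc ∫ y in cube z (a * t), |P₁ y - P₂ y| ≤ E₁ * t₁ ^ d + E₂ * t₂ ^ d :=
          h₁.integral_abs_sub_le_add h₂ hz₁ hz₂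
      _ ≤ E₁ * t ^ d + E₂ * t ^ d := by
        have := h₁.side_pos
        have := h₂.side_pos
        gcongr
      _ = (E₁ + E₂) * t ^ d := (add_mul _ _ _).symm
  calc |P₁ v - P₂ v|
      ≤ A * (B * R / (a * t)) ^ n * (((a * t) ^ d)⁻¹ * ∫ y in cube z (a * t), |P₁ y - P₂ y|) :=
        hPoly _ (PolyLE.sub_mem h₁.mem h₂.mem) z v (a * t) (B * R) (by positivity) (by gcongr) hv
    _ ≤ A * (B * R / (a * t)) ^ n * (((a * t) ^ d)⁻¹ * ((E₁ + E₂) * t ^ d)) := by gcongr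
    _ = A * (B / a) ^ n * (a ^ d)⁻¹ * (R / t) ^ n * (E₁ + E₂) := by
      rw [mul_div_mul_comm, mul_pow, mul_pow]
      field_simp

end IsApproxOn

lemma isApproxOn_zero {f : 𝔼 d → ℝ} {E t : ℝ} {z : 𝔼 d} (n : ℕ) (ht : 0 < t)
    (hf : IntegrableOn f (cube z t)) (hE : ∫ y in cube z t, |f y| ≤ E * t ^ d) :
    IsApproxOn n f E z t 0 :=
  ⟨PolyLE.zero_mem, ht, hf, by simpa using hE⟩

lemma tendsto_average_closedBall_const_mul {F : 𝔼 d → ℝ} {u : 𝔼 d} {B : ℝ} (hB : 0 < B)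
    (hu : Tendsto (fun ρ => ⨍ y in closedBall u ρ, ‖F y - F u‖) (𝓝[>] 0) (𝓝 0)) :
    Tendsto (fun t => (t ^ d)⁻¹ * ∫ y in closedBall u (B * t), ‖F y - F u‖) (𝓝[>] 0) (𝓝 0) := by
  have hscale : Tendsto (fun t => B * t) (𝓝[>] 0) (𝓝[>] 0) := by
    refine tendsto_nhdsWithin_iff.2 ⟨?_, eventually_mem_nhdsWithin.mono fun t ht => mul_pos hB ht⟩
    simpa using ((continuous_const_mul B).tendsto 0).mono_left nhdsWithin_le_nhds
  have hlim := ((hu.comp hscale).const_mul (B ^ d * volume.real (ball (0 : 𝔼 d) 1)))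
  rw [mul_zero] at hlim
  refine hlim.congr' (eventually_mem_nhdsWithin.mono fun t ht => ?_)
  have hvol : 0 < volume.real (ball (0 : 𝔼 d) 1) :=
    ENNReal.toReal_pos (measure_ball_pos volume 0 one_pos).ne' measure_ball_lt_top.ne
  have ht : 0 < t := ht
  simp only [Function.comp_apply, setAverage_eq, smul_eq_mul]
  rw [Measure.addHaar_real_closedBall _ _ (mul_pos hB ht).le, finrank_euclideanSpace,
    Fintype.card_fin, mul_pow]
  field_simp

lemma ae_exists_isApproxOn_const {D : Set (𝔼 d)} (hD : MeasurableSet D) {f : 𝔼 d → ℝ}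
    (hf : IntegrableOn f D) (n : ℕ) {L : ℝ} (hL : 0 < L) :
    ∀ᵐ u ∂volume.restrict D, ∃ ε : ℝ → ℝ, Tendsto ε (𝓝[>] 0) (𝓝 0) ∧
      ∀ z t, 0 < t → ‖z - u‖ ≤ L * t → cube z t ⊆ D →
        IsApproxOn n f (ε t) z t fun _ => f u := by
  set F := D.indicator f
  have hF : Integrable F := hf.integrable_indicator hD
  rw [ae_restrict_iff' hD]
  filter_upwards [IsUnifLocDoublingMeasure.ae_tendsto_average_norm_sub volume
    hF.locallyIntegrable 1] with u hu huD
  have hLeb := hu (fun _ => u) id tendsto_id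
    (eventually_mem_nhdsWithin.mono fun t ht => mem_closedBall_self (by simpa using ht.le))
  refine ⟨_, tendsto_average_closedBall_const_mul (by positivity : 0 < d + L) hLeb,
    fun z t ht hz hzD => ⟨PolyLE.const_mem _, ht, hf.mono_set hzD, ?_⟩⟩
  have hsub : cube z t ⊆ closedBall u ((d + L) * t) := by
    refine (cube_subset_closedBall z ht.le).trans (closedBall_subset_closedBall' ?_)
    rw [dist_eq_norm]
    linarith
  have hint : IntegrableOn (fun y => ‖F y - F u‖) (closedBall u ((d + L) * t)) :=
    (hF.integrableOn.sub (integrableOn_const measure_closedBall_lt_top.ne)).norm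
  calc ∫ y in cube z t, |f y - f u| = ∫ y in cube z t, ‖F y - F u‖ :=
        setIntegral_congr_fun (measurableSet_cube z t) fun y hy => by simp [F, hzD hy, huD]
    _ ≤ ∫ y in closedBall u ((d + L) * t), ‖F y - F u‖ :=
        setIntegral_mono_set hint (ae_of_all _ fun _ => norm_nonneg _) hsub.eventuallyLE
    _ = _ := by field_simp

/-! ### Chains of approximants along a cone -/

/-- A choice, for every `0 < t ≤ T`, of an approximant `P t` of `f` with mean error at most `M ω(t)`
on the cube of side `t` centred at `x + t • e`, where these cubes lie in `D`. -/
def IsConeChain (ω : ℝ → ℝ) (n : ℕ) (D : Set (𝔼 d)) (f : 𝔼 d → ℝ) (M T : ℝ) (x e : 𝔼 d)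
    (P : ℝ → 𝔼 d → ℝ) : Prop :=
  ∀ t, 0 < t → t ≤ T → cube (x + t • e) t ⊆ D ∧ IsApproxOn n f (M * ω t) (x + t • e) t (P t)

/-- Cubes of sides `t` and `coneRatio L * t` along a cone of axis `e`, `‖e‖ ≤ L`, overlap in a cube
of side `t / 4`. -/
def coneRatio (L : ℝ) : ℝ := 1 - (4 * L)⁻¹

lemma coneRatio_pos {L : ℝ} (hL : 1 ≤ L) : 0 < coneRatio L := by
  have : (4 * L)⁻¹ ≤ 4⁻¹ := by gcongr; linarith
  unfold coneRatio
  linarith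

lemma coneRatio_lt_one {L : ℝ} (hL : 1 ≤ L) : coneRatio L < 1 := by
  have : 0 < (4 * L)⁻¹ := by positivity
  unfold coneRatio
  linarith

lemma cube_quarter_subset_of_coneRatio_mul_le {x e : 𝔼 d} {L s t : ℝ} (hL : 1 ≤ L) (he : ‖e‖ ≤ L)
    (hst : coneRatio L * t ≤ s) (hts : s ≤ t) :
    cube (x + t • e) (1 / 4 * t) ⊆ cube (x + s • e) s := by
  have hgap : L * (t - s) ≤ 1 / 4 * t := by
    calc L * (t - s) ≤ L * ((4 * L)⁻¹ * t) := by
          gcongr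
          unfold coneRatio at hst
          linarith
      _ = 1 / 4 * t := by field_simp
  refine cube_subset_cube ?_
  calc ‖x + t • e - (x + s • e)‖ = ‖e‖ * (t - s) := by
        rw [add_sub_add_left_eq_sub, ← sub_smul, norm_smul, Real.norm_of_nonneg (by linarith),
          mul_comm]
    _ ≤ L * (t - s) := by gcongr
    _ ≤ (s - 1 / 4 * t) / 2 := by nlinarith

lemma norm_sub_add_smul_le {x e v : 𝔼 d} {L R t : ℝ} (he : ‖e‖ ≤ L) (ht : 0 ≤ t) (htR : t ≤ R)
    (hv : ‖v - x‖ ≤ R) : ‖v - (x + t • e)‖ ≤ (1 + L) * R := by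
  have hte : ‖t • e‖ ≤ R * L := by
    rw [norm_smul, Real.norm_of_nonneg ht]
    gcongr
    linarith
  rw [← sub_sub]
  linarith [norm_sub_le (v - x) (t • e)]

lemma div_pow_mul_div_rpow {q s t R : ℝ} (hs : 0 < s) (ht : 0 < t) (hR : 0 < R) :
    (R / t) ^ n * (t / s) ^ q = (R / s) ^ q * (t / R) ^ (q - n) := by
  rw [← div_mul_div_cancel₀ (a := R) (c := s) ht.ne', Real.mul_rpow (by positivity) (by positivity),
    ← inv_div R t, Real.inv_rpow (by positivity), Real.rpow_sub (by positivity), Real.rpow_natCast]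
  field_simp

namespace IsPowerModulus

variable {ω : ℝ → ℝ} {q r K : ℝ}

lemma tendsto_zero (hω : IsPowerModulus ω n q r K) : Tendsto ω (𝓝[>] 0) (𝓝 0) := by
  have hbound : Tendsto (fun s : ℝ => K * s ^ r * ω 1) (𝓝[>] 0) (𝓝 0) := by
    have := ((Real.continuousAt_rpow_const 0 r (.inr hω.r_pos.le)).tendsto.const_mul K).mul_const
      (ω 1)
    rw [Real.zero_rpow hω.r_pos.ne', mul_zero, zero_mul] at this
    exact this.mono_left nhdsWithin_le_nhds
  refine squeeze_zero' (eventually_mem_nhdsWithin.mono fun s hs => hω.nonneg hs) ?_ hbound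
  filter_upwards [Ioc_mem_nhdsGT one_pos] with s hs
  simpa using hω.le_contract hs.1 hs.2 one_pos

lemma exists_coneChain_step (hω : IsPowerModulus ω n q r K) {L : ℝ} (hL : 1 ≤ L) (d : ℕ) :
    ∃ C, 0 ≤ C ∧ ∀ {D f M T x e P}, 0 ≤ M → IsConeChain (d := d) ω n D f M T x e P → ‖e‖ ≤ L →
      ∀ {s t R v}, 0 < s → coneRatio L * t ≤ s → s ≤ t → t ≤ T → t ≤ R → ‖v - x‖ ≤ R →
        |P t v - P s v| ≤ C * (R / t) ^ n * (M * ω t) := by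
  obtain ⟨C, hC, hcompare⟩ := IsApproxOn.exists_abs_sub_le d n
    (by norm_num : (0 : ℝ) < 1 / 4) (by linarith : 1 / 4 ≤ 1 + L)
  refine ⟨C * 2, by positivity, ?_⟩
  intro D f M T x e P hM hP he s t R v hs hst hts htT htR hv
  have ht : 0 < t := hs.trans_le hts
  have hR : 0 < R := ht.trans_le htR
  calc |P t v - P s v| ≤ C * (R / t) ^ n * (M * ω t + M * ω s) :=
        hcompare (hP t ht htT).2 (hP s hs (hts.trans htT)).2 le_rfl hts
          (cube_subset_cube (by rw [sub_self, norm_zero]; linarith))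
          (cube_quarter_subset_of_coneRatio_mul_le hL he hst hts) htR
          (norm_sub_add_smul_le he ht.le htR hv)
    _ ≤ C * (R / t) ^ n * (M * ω t + M * ω t) := by gcongr; exact hω.mono hs hts
    _ = C * 2 * (R / t) ^ n * (M * ω t) := by ring

lemma exists_coneChain_vertex (hω : IsPowerModulus ω n q r K) {L : ℝ} (hL : 1 ≤ L) (d : ℕ) :
    ∃ C, 0 ≤ C ∧ ∀ {D f M T x e P y}, 0 ≤ M → IsConeChain (d := d) ω n D f M T x e P → ‖e‖ ≤ L →
      0 < T → Tendsto (fun t => P t x) (𝓝[>] 0) (𝓝 y) → |P T x - y| ≤ C * (M * ω T) := by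
  obtain ⟨C, hC, hstep⟩ := hω.exists_coneChain_step hL d
  set c := coneRatio L
  have hc0 : 0 < c := coneRatio_pos hL
  have hc1 : c < 1 := coneRatio_lt_one hL
  have hcr : c ^ r < 1 := Real.rpow_lt_one hc0.le hc1 hω.r_pos
  have hK := hω.C_nonneg
  refine ⟨C * K / (1 - c ^ r), div_nonneg (by positivity) (by linarith), ?_⟩
  intro D f M T x e P y hM hP he hT hlim
  have hscale : Tendsto (fun k : ℕ => c ^ k * T) atTop (𝓝[>] 0) := by
    refine tendsto_nhdsWithin_iff.2 ⟨?_, .of_forall fun k => by rw [mem_Ioi]; positivity⟩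
    simpa using (tendsto_pow_atTop_nhds_zero_of_lt_one hc0.le hc1).mul_const T
  have hgeom (k : ℕ) : dist (P (c ^ k * T) x) (P (c ^ (k + 1) * T) x) ≤
      C * K * (M * ω T) * (c ^ r) ^ k := by
    have hck : c ^ k ≤ 1 := pow_le_one₀ hc0.le hc1.le
    have hcT : 0 < c ^ k * T := by positivity
    have hratio : c * (c ^ k * T) = c ^ (k + 1) * T := by ring
    calc dist (P (c ^ k * T) x) (P (c ^ (k + 1) * T) x)
        ≤ C * (c ^ k * T / (c ^ k * T)) ^ n * (M * ω (c ^ k * T)) :=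
          hstep hM hP he (by positivity) hratio.le
            (hratio ▸ mul_le_of_le_one_left hcT.le hc1.le) (mul_le_of_le_one_left hT.le hck)
            le_rfl (by simpa using hcT.le)
      _ = C * (M * ω (c ^ k * T)) := by rw [div_self hcT.ne', one_pow, mul_one]
      _ ≤ C * (M * (K * (c ^ k) ^ r * ω T)) := by
        gcongr
        exact hω.le_contract (by positivity) hck hT
      _ = C * K * (M * ω T) * (c ^ r) ^ k := by rw [← Real.rpow_pow_comm hc0.le]; ring
  have := dist_le_of_le_geometric_of_tendsto₀ _ _ hcr hgeom (hlim.comp hscale)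
  rw [pow_zero, one_mul, Real.dist_eq] at this
  exact this.trans_eq (by ring)

lemma exists_coneChain_weighted_step (hω : IsPowerModulus ω n q r K) {L : ℝ} (hL : 1 ≤ L) (d : ℕ) :
    ∃ C, 0 ≤ C ∧ ∀ {D f M T x e P}, 0 ≤ M → IsConeChain (d := d) ω n D f M T x e P → ‖e‖ ≤ L →
      ∀ {s s' t R v}, 0 < s → s ≤ s' → coneRatio L * t ≤ s' → s' ≤ t → t ≤ T → t ≤ R →
        ‖v - x‖ ≤ R → |P t v - P s' v| ≤ C * (M * ω s) * (R / s) ^ q * (t / R) ^ (q - n) := by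
  obtain ⟨C, hC, hstep⟩ := hω.exists_coneChain_step hL d
  refine ⟨C * K, mul_nonneg hC hω.C_nonneg, ?_⟩
  intro D f M T x e P hM hP he s s' t R v hs hss' hts' hs't htT htR hv
  have ht : 0 < t := by linarith
  have hR : 0 < R := by linarith
  calc |P t v - P s' v| ≤ C * (R / t) ^ n * (M * ω t) :=
        hstep hM hP he (hs.trans_le hss') hts' hs't htT htR hv
    _ ≤ C * (R / t) ^ n * (M * (K * (t / s) ^ q * ω s)) := by
      gcongr
      exact hω.le_dilate hs (hss'.trans hs't)
    _ = C * K * (M * ω s) * ((R / t) ^ n * (t / s) ^ q) := by ring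
    _ = C * K * (M * ω s) * (R / s) ^ q * (t / R) ^ (q - n) := by
      rw [div_pow_mul_div_rpow hs ht hR, ← mul_assoc (C * K * (M * ω s))]

-- The scales `max s (c ^ k * S)` descend from `S` and stop at `s`, so that the climb from `s` to
-- `S` is again bounded by an infinite geometric series.
lemma exists_coneChain_climb_step (hω : IsPowerModulus ω n q r K) {L : ℝ} (hL : 1 ≤ L) (d : ℕ) :
    ∃ C, 0 ≤ C ∧ ∀ {D f M T x e P}, 0 ≤ M → IsConeChain (d := d) ω n D f M T x e P → ‖e‖ ≤ L →
      ∀ {s S R v}, 0 < s → 0 < S → S ≤ T → S ≤ R → ‖v - x‖ ≤ R → ∀ k : ℕ,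
        dist (P (max s (coneRatio L ^ k * S)) v) (P (max s (coneRatio L ^ (k + 1) * S)) v) ≤
          C * (M * ω s) * (R / s) ^ q * (coneRatio L ^ (q - n)) ^ k := by
  obtain ⟨C, hC, hstep⟩ := hω.exists_coneChain_weighted_step hL d
  refine ⟨C, hC, ?_⟩
  intro D f M T x e P hM hP he s S R v hs hS hST hSR hv k
  set c := coneRatio L
  have hc0 : 0 < c := coneRatio_pos hL
  have hc1 : c < 1 := coneRatio_lt_one hL
  have hR : 0 < R := hS.trans_le hSR
  have hωs := hω.nonneg hs
  have hcS : c ^ (k + 1) * S = c * (c ^ k * S) := by ring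
  have hcS_le : c * (c ^ k * S) ≤ c ^ k * S := mul_le_of_le_one_left (by positivity) hc1.le
  obtain hle | hlt := le_or_gt (c ^ k * S) s
  · rw [max_eq_left hle, hcS, max_eq_left (hcS_le.trans hle), dist_self]
    positivity
  have htS : c ^ k * S ≤ S := mul_le_of_le_one_left hS.le (pow_le_one₀ hc0.le hc1.le)
  rw [max_eq_right hlt.le]
  calc dist (P (c ^ k * S) v) (P (max s (c ^ (k + 1) * S)) v)
      ≤ C * (M * ω s) * (R / s) ^ q * (c ^ k * S / R) ^ (q - n) :=
        hstep hM hP he hs (le_max_left _ _) (hcS.ge.trans (le_max_right _ _))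
          (max_le hlt.le (hcS.trans_le hcS_le)) (htS.trans hST) (htS.trans hSR) hv
    _ ≤ C * (M * ω s) * (R / s) ^ q * (c ^ (q - n)) ^ k := by
      rw [Real.rpow_pow_comm hc0.le]
      gcongr
      · exact (sub_pos.2 hω.lt_q).le
      · rw [div_le_iff₀ hR]
        gcongr

lemma exists_coneChain_climb (hω : IsPowerModulus ω n q r K) {L : ℝ} (hL : 1 ≤ L) (d : ℕ) :
    ∃ C, 0 ≤ C ∧ ∀ {D f M T x e P}, 0 ≤ M → IsConeChain (d := d) ω n D f M T x e P → ‖e‖ ≤ L →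
      ∀ {s S R v}, 0 < s → s ≤ S → S ≤ T → S ≤ R → ‖v - x‖ ≤ R →
        |P S v - P s v| ≤ C * (M * ω s) * (R / s) ^ q := by
  obtain ⟨C, hC, hstep⟩ := hω.exists_coneChain_climb_step hL d
  set c := coneRatio L
  have hc0 : 0 < c := coneRatio_pos hL
  have hc1 : c < 1 := coneRatio_lt_one hL
  have hcq : c ^ (q - n) < 1 := Real.rpow_lt_one hc0.le hc1 (sub_pos.2 hω.lt_q)
  refine ⟨C / (1 - c ^ (q - n)), div_nonneg hC (by linarith), ?_⟩
  intro D f M T x e P hM hP he s S R v hs hsS hST hSR hv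
  have hlim : Tendsto (fun k : ℕ => P (max s (c ^ k * S)) v) atTop (𝓝 (P s v)) := by
    have hscale : Tendsto (fun k : ℕ => c ^ k * S) atTop (𝓝 0) := by
      simpa using (tendsto_pow_atTop_nhds_zero_of_lt_one hc0.le hc1).mul_const S
    refine tendsto_const_nhds.congr' ?_
    filter_upwards [hscale.eventually_le_const hs] with k hk
    rw [max_eq_left hk]
  have := dist_le_of_le_geometric_of_tendsto₀ _ _ hcq
    (hstep hM hP he hs (hs.trans_le hsS) hST hSR hv) hlim
  simp only [pow_zero, one_mul, max_eq_right hsS, Real.dist_eq] at this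
  exact this.trans_eq (by ring)

end IsPowerModulus

/-! ### Pointwise bounds -/

/-- `f` is integrable on `D` with `L¹` norm at most `M`, and on every cube of side `t` in `D` it is
within mean distance `M ω(t)` of a polynomial of degree at most `n`. -/
structure ZygmundBound (ω : ℝ → ℝ) (n : ℕ) (D : Set (𝔼 d)) (f : 𝔼 d → ℝ) (M : ℝ) : Prop where
  nonneg : 0 ≤ M
  integrableOn : IntegrableOn f D
  integral_abs_le : ∫ x in D, |f x| ≤ M
  exists_isApproxOn : ∀ z t, 0 < t → cube z t ⊆ D → ∃ P, IsApproxOn n f (M * ω t) z t P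

lemma ZygmundBound.exists_isConeChain {ω : ℝ → ℝ} {D : Set (𝔼 d)} {f : 𝔼 d → ℝ} {M T : ℝ}
    {x e : 𝔼 d} (hf : ZygmundBound ω n D f M)
    (hcone : ∀ t, 0 < t → t ≤ T → cube (x + t • e) t ⊆ D) :
    ∃ P, IsConeChain ω n D f M T x e P := by
  choose! P hP using fun t (ht : 0 < t) (htT : t ≤ T) =>
    hf.exists_isApproxOn (x + t • e) t ht (hcone t ht htT)
  exact ⟨P, fun t ht htT => ⟨hcone t ht htT, hP t ht htT⟩⟩

lemma IsConeChain.mono {ω : ℝ → ℝ} {D : Set (𝔼 d)} {f : 𝔼 d → ℝ} {M S T : ℝ} {x e : 𝔼 d}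
    {P : ℝ → 𝔼 d → ℝ} (hP : IsConeChain ω n D f M T x e P) (hST : S ≤ T) :
    IsConeChain ω n D f M S x e P :=
  fun t ht htS => hP t ht (htS.trans hST)

namespace IsPowerModulus

variable {ω : ℝ → ℝ} {q r K L : ℝ}

lemma exists_ae_abs_sub_coneChain_le (hω : IsPowerModulus ω n q r K) (hL : 1 ≤ L)
    {D : Set (𝔼 d)} (hD : MeasurableSet D) :
    ∃ C, 0 ≤ C ∧ ∀ {f M}, ZygmundBound ω n D f M → ∀ᵐ u ∂volume.restrict D,
      ∀ e T P, ‖e‖ ≤ L → 0 < T → IsConeChain ω n D f M T u e P →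
        |P T u - f u| ≤ C * (M * ω T) := by
  obtain ⟨C, hC, hvertex⟩ := hω.exists_coneChain_vertex hL d
  obtain ⟨C', -, hcompare⟩ := IsApproxOn.exists_abs_sub_le d n one_pos hL
  refine ⟨C, hC, fun {f M} hf => ?_⟩
  filter_upwards [ae_exists_isApproxOn_const hD hf.integrableOn n (by linarith : 0 < L)]
    with u ⟨ε, hε, hconst⟩ e T P he hT hP
  refine hvertex hf.nonneg hP he hT ?_
  have hlim : Tendsto (fun t => C' * (M * ω t + ε t)) (𝓝[>] 0) (𝓝 0) := by
    simpa using ((hω.tendsto_zero.const_mul M).add hε).const_mul C'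
  refine tendsto_iff_dist_tendsto_zero.2 (squeeze_zero' (.of_forall fun _ => dist_nonneg) ?_ hlim)
  filter_upwards [Ioc_mem_nhdsGT hT] with t ⟨ht, htT⟩
  have hnorm : ‖t • e‖ ≤ L * t := by
    rw [norm_smul, Real.norm_of_nonneg ht.le, mul_comm]
    gcongr
  have := hcompare (v := u) (hP t ht htT).2
    (hconst _ t ht (by simpa using hnorm) (hP t ht htT).1) le_rfl le_rfl
    (by rw [one_mul]) (by rw [one_mul]) le_rfl (by simpa using hnorm)
  simpa [div_self ht.ne', Real.dist_eq] using this

lemma exists_abs_coneChain_top_le (hω : IsPowerModulus ω n q r K) (hL : 1 ≤ L) (d : ℕ) {T R : ℝ}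
    (hT : 0 < T) (hTR : T ≤ R) : ∃ C, 0 ≤ C ∧ ∀ {D f M x e P v}, ZygmundBound (d := d) ω n D f M →
      IsConeChain ω n D f M T x e P → ‖e‖ ≤ L → ‖v - x‖ ≤ R → |P T v| ≤ C * M := by
  obtain ⟨C, hC, hcompare⟩ := IsApproxOn.exists_abs_sub_le d n one_pos (by linarith : 1 ≤ 1 + L)
  have hωT := hω.nonneg hT
  have hR : 0 < R := hT.trans_le hTR
  refine ⟨C * (R / T) ^ n * (ω T + (T ^ d)⁻¹), by positivity, ?_⟩
  intro D f M x e P v hf hP he hv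
  obtain ⟨hcubeD, happrox⟩ := hP T hT le_rfl
  have hzero : IsApproxOn n f (M * (T ^ d)⁻¹) (x + T • e) T 0 := by
    refine isApproxOn_zero n hT (hf.integrableOn.mono_set hcubeD) ?_
    rw [mul_assoc, inv_mul_cancel₀ (by positivity), mul_one]
    exact (setIntegral_mono_set hf.integrableOn.abs (ae_of_all _ fun _ => abs_nonneg _)
      hcubeD.eventuallyLE).trans hf.integral_abs_le
  have := hcompare happrox hzero le_rfl le_rfl (by rw [one_mul]) (by rw [one_mul]) hTR
    (norm_sub_add_smul_le he hT.le hTR hv)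
  rw [Pi.zero_apply, sub_zero] at this
  exact this.trans_eq (by ring)

lemma exists_ae_abs_le (hω : IsPowerModulus ω n q r K) {D : Set (𝔼 d)} (hD : MeasurableSet D)
    {T : ℝ} (hcones : HasCones D L T) :
    ∃ C, 0 ≤ C ∧ ∀ {f M}, ZygmundBound ω n D f M → ∀ᵐ u ∂volume.restrict D, |f u| ≤ C * M := by
  have hT := hcones.pos
  obtain ⟨C₁, hC₁, hvertex⟩ := hω.exists_ae_abs_sub_coneChain_le hcones.one_le hD
  obtain ⟨C₂, hC₂, htop⟩ := hω.exists_abs_coneChain_top_le hcones.one_le d hT le_rfl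
  have hωT := hω.nonneg hT
  refine ⟨C₁ * ω T + C₂, by positivity, fun {f M} hf => ?_⟩
  filter_upwards [hvertex hf, ae_restrict_mem hD] with u hu huD
  obtain ⟨e, he, hcone⟩ := hcones.exists_axis u huD u huD (by simpa using hT)
  obtain ⟨P, hP⟩ := hf.exists_isConeChain fun t ht htT => (hcone t ht htT).1
  have htop_u : |P T u| ≤ C₂ * M := htop hf hP he (by simpa using hT.le)
  linarith [hu e T P he hT hP, abs_sub_abs_le_abs_sub (f u) (P T u), abs_sub_comm (f u) (P T u)]

lemma exists_abs_sub_coneChain_start_le (hω : IsPowerModulus ω n q r K) (hL : 1 ≤ L) (d : ℕ)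
    {c : ℝ} (hc : 0 < c) (hcL : c * L ≤ 1 / 4) : ∃ C, 0 ≤ C ∧ ∀ {D f M T x e Q l P R v}, 0 ≤ M →
      IsConeChain (d := d) ω n D f M T x e Q → ‖e‖ ≤ L → IsApproxOn n f (M * ω l) x l P →
      c * l ≤ T → l ≤ R → ‖v - x‖ ≤ R → |Q (c * l) v - P v| ≤ C * (M * ω l) * (R / l) ^ q := by
  obtain ⟨C, hC, hcompare⟩ := IsApproxOn.exists_abs_sub_le d n hc (by nlinarith : c ≤ 1 + L)
  refine ⟨C * 2, by positivity, ?_⟩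
  intro D f M T x e Q l P R v hM hQ he hP hcT hlR hv
  have hl := hP.side_pos
  have hcl : 0 < c * l := by positivity
  have hcl_le : c * l ≤ l := by nlinarith
  have hωl := hω.nonneg hl
  have hωcl : ω (c * l) ≤ ω l := hω.mono hcl hcl_le
  have hlarge : 1 ≤ R / l := (one_le_div hl).2 hlR
  have hsubcube : cube (x + (c * l) • e) (c * l) ⊆ cube x l := by
    refine cube_subset_cube ?_
    rw [add_sub_cancel_left, norm_smul, Real.norm_of_nonneg hcl.le]
    have : c * l * ‖e‖ ≤ c * l * L := by gcongr
    nlinarith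
  calc |Q (c * l) v - P v| ≤ C * (R / l) ^ n * (M * ω (c * l) + M * ω l) :=
        hcompare (hQ _ hcl hcT).2 hP hcl_le le_rfl le_rfl hsubcube hlR
          (norm_sub_add_smul_le he hcl.le (hcl_le.trans hlR) hv)
    _ ≤ C * (R / l) ^ n * (M * ω l + M * ω l) := by gcongr
    _ = C * 2 * (M * ω l) * (R / l) ^ (n : ℝ) := by rw [Real.rpow_natCast]; ring
    _ ≤ C * 2 * (M * ω l) * (R / l) ^ q := by
      gcongr
      exact hω.lt_q.le

lemma exists_abs_sub_coneChain_le (hω : IsPowerModulus ω n q r K) (hL : 1 ≤ L) (d : ℕ) {c : ℝ}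
    (hc : 0 < c) (hcL : c * L ≤ 1 / 4) : ∃ C, 0 ≤ C ∧ ∀ {D f M T x e Q l P S R v}, 0 ≤ M →
      IsConeChain (d := d) ω n D f M T x e Q → ‖e‖ ≤ L → IsApproxOn n f (M * ω l) x l P →
      c * l ≤ S → S ≤ T → l ≤ R → S ≤ R → ‖v - x‖ ≤ R →
        |Q S v - P v| ≤ C * (M * ω l) * (R / l) ^ q := by
  obtain ⟨C₁, hC₁, hstart⟩ := hω.exists_abs_sub_coneChain_start_le hL d hc hcL
  obtain ⟨C₂, hC₂, hclimb⟩ := hω.exists_coneChain_climb hL d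
  refine ⟨C₁ + C₂ * (c⁻¹) ^ q, by positivity, ?_⟩
  intro D f M T x e Q l P S R v hM hQ he hP hclS hST hlR hSR hv
  have hl := hP.side_pos
  have hcl : 0 < c * l := by positivity
  have hR : 0 < R := hl.trans_le hlR
  have hstart_v := hstart hM hQ he hP (hclS.trans hST) hlR hv
  have hclimb_v : |Q S v - Q (c * l) v| ≤ C₂ * (c⁻¹) ^ q * (M * ω l) * (R / l) ^ q :=
    calc |Q S v - Q (c * l) v| ≤ C₂ * (M * ω (c * l)) * (R / (c * l)) ^ q :=
          hclimb hM hQ he hcl hclS hST hSR hv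
      _ ≤ C₂ * (M * ω l) * (R / (c * l)) ^ q := by
        gcongr
        exact hω.mono hcl (by nlinarith)
      _ = C₂ * (c⁻¹) ^ q * (M * ω l) * (R / l) ^ q := by
        rw [div_mul_eq_div_div_swap, div_eq_mul_inv (R / l),
          Real.mul_rpow (by positivity) (by positivity)]
        ring
  linarith [abs_sub_le (Q S v) (Q (c * l) v) (P v)]

lemma exists_abs_sub_coneChain_of_parallel_le (hL : 1 ≤ L) (d n : ℕ) : ∃ C, 0 ≤ C ∧
    ∀ {ω D f M T x u e Qx Qu S v}, IsConeChain (d := d) ω n D f M T x e Qx →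
      IsConeChain ω n D f M T u e Qu → ‖e‖ ≤ L → 0 < S → S ≤ T → 4 * ‖u - x‖ ≤ S → ‖v - x‖ ≤ S →
        |Qx S v - Qu S v| ≤ C * (M * ω S) := by
  obtain ⟨C, hC, hcompare⟩ := IsApproxOn.exists_abs_sub_le d n
    (by norm_num : (0 : ℝ) < 1 / 4) (by linarith : 1 / 4 ≤ 1 + L)
  refine ⟨C * 2, by positivity, ?_⟩
  intro ω D f M T x u e Qx Qu S v hQx hQu he hS hST hux hv
  have := hcompare (hQx S hS hST).2 (hQu S hS hST).2 le_rfl le_rfl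
    (cube_subset_cube (by rw [sub_self, norm_zero]; linarith))
    (cube_subset_cube (by rw [add_sub_add_right_eq_sub, norm_sub_rev]; linarith)) le_rfl
    (norm_sub_add_smul_le he hS.le le_rfl hv)
  rw [div_self hS.ne', one_pow, mul_one] at this
  exact this.trans_eq (by ring)

lemma exists_ae_abs_sub_le_of_near (hω : IsPowerModulus ω n q r K) {D : Set (𝔼 d)}
    (hD : MeasurableSet D) {T : ℝ} (hcones : HasCones D L T) :
    ∃ C, 0 ≤ C ∧ ∀ {f M}, ZygmundBound ω n D f M → ∀ᵐ u ∂volume.restrict D,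
      ∀ x l P, x ∈ D → IsApproxOn n f (M * ω l) x l P → l ≤ ‖u - x‖ → 4 * ‖u - x‖ ≤ T →
        |f u - P u| ≤ C * (M * ω l) * (‖u - x‖ / l) ^ q := by
  have hL := hcones.one_le
  have : 0 < L := by linarith
  obtain ⟨C₁, hC₁, hvertex⟩ := hω.exists_ae_abs_sub_coneChain_le hL hD
  obtain ⟨C₂, hC₂, hclimb⟩ := hω.exists_abs_sub_coneChain_le hL d
    (by positivity : 0 < (4 * L)⁻¹) (by field_simp; rfl)
  obtain ⟨C₃, hC₃, hparallel⟩ := exists_abs_sub_coneChain_of_parallel_le hL d n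
  have hK := hω.C_nonneg
  refine ⟨((C₁ + C₃) * K + C₂) * 4 ^ q, by positivity, fun {f M} hf => ?_⟩
  filter_upwards [hvertex hf, ae_restrict_mem hD] with u hu huD x l P hxD hP hlρ hρT
  set ρ := ‖u - x‖
  have hl := hP.side_pos
  have hρ : 0 < ρ := hl.trans_le hlρ
  obtain ⟨e, he, hcone⟩ := hcones.exists_axis x hxD u huD <| by
    rw [dist_comm, dist_eq_norm]
    linarith
  obtain ⟨Qx, hQx⟩ := hf.exists_isConeChain fun t ht htT => (hcone t ht htT).1
  obtain ⟨Qu, hQu⟩ := hf.exists_isConeChain fun t ht htT => (hcone t ht htT).2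
  have hS : 0 < 4 * ρ := by positivity
  have := hω.nonneg hl
  have hM := hf.nonneg
  have hv : ‖u - x‖ ≤ 4 * ρ := by linarith
  have hlS : l ≤ 4 * ρ := by linarith
  have hx : |Qx (4 * ρ) u - P u| ≤ C₂ * (M * ω l) * (4 * ρ / l) ^ q :=
    hclimb hM hQx he hP ((mul_le_of_le_one_left hl.le
      (inv_le_one_of_one_le₀ (by linarith))).trans hlS) hρT hlS le_rfl hv
  have hxu : |Qx (4 * ρ) u - Qu (4 * ρ) u| ≤ C₃ * (M * ω (4 * ρ)) :=
    hparallel hQx hQu he hS hρT le_rfl hv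
  have huu : |Qu (4 * ρ) u - f u| ≤ C₁ * (M * ω (4 * ρ)) := hu e _ Qu he hS (.mono hQu hρT)
  calc |f u - P u| ≤ (C₁ + C₃) * (M * ω (4 * ρ)) + C₂ * (M * ω l) * (4 * ρ / l) ^ q := by
        linarith [abs_sub_le (f u) (Qu (4 * ρ) u) (P u), abs_sub_le (Qu (4 * ρ) u) (Qx (4 * ρ) u)
          (P u), abs_sub_comm (f u) (Qu (4 * ρ) u), abs_sub_comm (Qu (4 * ρ) u) (Qx (4 * ρ) u)]
    _ ≤ (C₁ + C₃) * (M * (K * (4 * ρ / l) ^ q * ω l)) +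
          C₂ * (M * ω l) * (4 * ρ / l) ^ q := by
      gcongr
      exact hω.le_dilate hl hlS
    _ = ((C₁ + C₃) * K + C₂) * 4 ^ q * (M * ω l) * (ρ / l) ^ q := by
      rw [mul_div_assoc, Real.mul_rpow (by norm_num) (by positivity)]
      ring

lemma exists_ae_abs_sub_le_mul_div_rpow (hω : IsPowerModulus ω n q r K)
    (hpos : ∀ t, 0 < t → 0 < ω t) {D : Set (𝔼 d)} (hD : MeasurableSet D) {T R : ℝ}
    (hcones : HasCones D L T) (hTR : T ≤ R) :
    ∃ C, 0 ≤ C ∧ ∀ {f M}, ZygmundBound ω n D f M → ∀ᵐ u ∂volume.restrict D,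
      ∀ x l P, x ∈ D → IsApproxOn n f (M * ω l) x l P → l ≤ R → ‖u - x‖ ≤ R →
        |f u - P u| ≤ C * (M * ω l) * (R / l) ^ q := by
  have hL := hcones.one_le
  have hT := hcones.pos
  have : 0 < L := by linarith
  have hR : 0 < R := hT.trans_le hTR
  have : T / R ≤ 1 := (div_le_one hR).2 hTR
  obtain ⟨C₁, hC₁, hbound⟩ := hω.exists_ae_abs_le hD hcones
  obtain ⟨C₂, hC₂, hclimb⟩ := hω.exists_abs_sub_coneChain_le hL d
    (by positivity : 0 < (4 * L)⁻¹ * (T / R)) (by field_simp; linarith)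
  obtain ⟨C₃, hC₃, htop⟩ := hω.exists_abs_coneChain_top_le hL d hT hTR
  have hK := hω.C_nonneg
  have hωR := hpos R hR
  refine ⟨(C₁ + C₃) * (K / ω R) + C₂, by positivity, fun {f M} hf => ?_⟩
  filter_upwards [hbound hf] with u hfu x l P hxD hP hlR hv
  have hl := hP.side_pos
  have hM := hf.nonneg
  obtain ⟨e, he, hcone⟩ := hcones.exists_axis x hxD x hxD (by simpa using hT)
  obtain ⟨Q, hQ⟩ := hf.exists_isConeChain fun t ht htT => (hcone t ht htT).1
  have hscale : (4 * L)⁻¹ * (T / R) * l ≤ T :=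
    calc (4 * L)⁻¹ * (T / R) * l ≤ 1 * (T / R) * R := by
          gcongr
          exact inv_le_one_of_one_le₀ (by linarith)
      _ = T := by field_simp
  have hx : |Q T u - P u| ≤ C₂ * (M * ω l) * (R / l) ^ q :=
    hclimb hM hQ he hP hscale le_rfl hlR hTR hv
  have hQu : |Q T u| ≤ C₃ * M := htop hf hQ he hv
  have hM_le : M ≤ K / ω R * (M * ω l) * (R / l) ^ q :=
    calc M = M * ω R / ω R := by field_simp
      _ ≤ M * (K * (R / l) ^ q * ω l) / ω R := by
        gcongr
        exact hω.le_dilate hl hlR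
      _ = K / ω R * (M * ω l) * (R / l) ^ q := by ring
  calc |f u - P u| ≤ (C₁ + C₃) * M + C₂ * (M * ω l) * (R / l) ^ q := by
        linarith [abs_sub_le (f u) (Q T u) (P u), abs_sub (f u) (Q T u)]
    _ ≤ (C₁ + C₃) * (K / ω R * (M * ω l) * (R / l) ^ q) + C₂ * (M * ω l) * (R / l) ^ q := by
      gcongr
    _ = ((C₁ + C₃) * (K / ω R) + C₂) * (M * ω l) * (R / l) ^ q := by ring

lemma exists_ae_abs_sub_le (hω : IsPowerModulus ω n q r K) (hpos : ∀ t, 0 < t → 0 < ω t)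
    {D : Set (𝔼 d)} (hD : MeasurableSet D) {T : ℝ} (hcones : HasCones D L T)
    (hbdd : Bornology.IsBounded D) :
    ∃ C, 0 ≤ C ∧ ∀ {f M}, ZygmundBound ω n D f M → ∀ᵐ u ∂volume.restrict D,
      ∀ x l P, x ∈ D → IsApproxOn n f (M * ω l) x l P → l ≤ ‖u - x‖ →
        |f u - P u| ≤ C * (M * ω l) * (‖u - x‖ / l) ^ q := by
  have hT := hcones.pos
  set R := max T (diam D)
  have hR : 0 < R := hT.trans_le (le_max_left _ _)
  obtain ⟨C₁, hC₁, hnear⟩ := hω.exists_ae_abs_sub_le_of_near hD hcones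
  obtain ⟨C₂, hC₂, hfar⟩ :=
    hω.exists_ae_abs_sub_le_mul_div_rpow hpos hD hcones (le_max_left T (diam D))
  refine ⟨C₁ + C₂ * (4 * R / T) ^ q, by positivity, fun {f M} hf => ?_⟩
  filter_upwards [hnear hf, hfar hf, ae_restrict_mem hD] with u hu_near hu_far huD x l P hxD hP hlρ
  set ρ := ‖u - x‖
  have hl := hP.side_pos
  have hρ : 0 < ρ := hl.trans_le hlρ
  have hE := hP.error_nonneg
  obtain hle | hlt := le_or_gt (4 * ρ) T
  · refine (hu_near x l P hxD hP hlρ hle).trans ?_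
    gcongr
    exact le_add_of_nonneg_right (by positivity)
  have hρR : ρ ≤ R := (dist_eq_norm u x).symm.trans_le
    ((dist_le_diam_of_mem hbdd huD hxD).trans (le_max_right _ _))
  have hR_le : R ≤ 4 * R / T * ρ := by
    rw [div_mul_eq_mul_div, le_div_iff₀ hT]
    nlinarith
  calc |f u - P u| ≤ C₂ * (M * ω l) * (R / l) ^ q := hu_far x l P hxD hP (hlρ.trans hρR) hρR
    _ ≤ C₂ * (M * ω l) * (4 * R / T * ρ / l) ^ q := by
      gcongr
      exact (Nat.cast_nonneg n).trans hω.lt_q.le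
    _ = C₂ * (4 * R / T) ^ q * (M * ω l) * (ρ / l) ^ q := by
      rw [mul_div_assoc, Real.mul_rpow (by positivity) (by positivity)]
      ring
    _ ≤ (C₁ + C₂ * (4 * R / T) ^ q) * (M * ω l) * (ρ / l) ^ q := by
      gcongr
      exact le_add_of_nonneg_left hC₁

end IsPowerModulus

/-! ### The potential of a function supported far away -/

lemma le_norm_sub_of_notMem_cube {x u : 𝔼 d} {l : ℝ} (hu : u ∉ cube x (2 * l)) : l ≤ ‖u - x‖ := by
  by_contra! hlt
  exact hu (closedBall_subset_cube x (2 * l) (mem_closedBall_iff_norm.2 (by linarith)))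

lemma norm_sub_le_mul_norm_sub_add_smul {x y u : 𝔼 d} {l t : ℝ} (hl : 0 ≤ l)
    (hu : u ∉ cube x (2 * l)) (hy : y ∈ cube x l) (ht : t ∈ Icc (0 : ℝ) 1) :
    ‖u - x‖ ≤ (2 * d + 1) * ‖x - u + t • (y - x)‖ := by
  have hnorm : ‖t • (y - x)‖ ≤ d * l := by
    rw [norm_smul, Real.norm_of_nonneg ht.1]
    have := mem_closedBall_iff_norm.1 (cube_subset_closedBall x hl hy)
    exact (mul_le_of_le_one_left (norm_nonneg _) ht.2).trans this
  have hhalf : l / 2 ≤ ‖x - u + t • (y - x)‖ := by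
    obtain ⟨i, hi⟩ : ∃ i, 2 * l / 2 < |u i - x i| := by simpa [cube] using hu
    have hcoord : |t * (y i - x i)| ≤ l / 2 := by
      rw [abs_mul, abs_of_nonneg ht.1]
      exact (mul_le_of_le_one_left (abs_nonneg _) ht.2).trans (hy i)
    have hle : |x i - u i + t * (y i - x i)| ≤ ‖x - u + t • (y - x)‖ :=
      PiLp.norm_apply_le (x - u + t • (y - x)) i
    have htri := abs_sub_abs_le_abs_sub (x i - u i) (-(t * (y i - x i)))
    rw [abs_neg, sub_neg_eq_add, abs_sub_comm] at htri
    linarith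
  have htri := norm_sub_le (x - u + t • (y - x)) (t • (y - x))
  rw [add_sub_cancel_right, norm_sub_rev] at htri
  nlinarith [(Nat.cast_nonneg d : (0 : ℝ) ≤ d)]

lemma integrable_one_add_norm_sub_div_rpow (x : 𝔼 d) {l a : ℝ} (hl : 0 < l) (ha : d < a) :
    Integrable fun u : 𝔼 d => (1 + ‖u - x‖ / l) ^ (-a) := by
  have hint : Integrable fun v : 𝔼 d => (1 + ‖v‖) ^ (-a) :=
    integrable_one_add_norm (by simpa using ha)
  simpa [norm_smul, abs_of_pos hl, div_eq_inv_mul] using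
    (hint.comp_smul (inv_ne_zero hl.ne')).comp_sub_right x

lemma integral_one_add_norm_sub_div_rpow (x : 𝔼 d) {l : ℝ} (hl : 0 < l) (a : ℝ) :
    ∫ u : 𝔼 d, (1 + ‖u - x‖ / l) ^ (-a) = l ^ d * ∫ v : 𝔼 d, (1 + ‖v‖) ^ (-a) := by
  have hscale := Measure.integral_comp_inv_smul_of_nonneg (volume : Measure (𝔼 d))
    (fun v => (1 + ‖v‖) ^ (-a)) hl.le
  rw [integral_sub_right_eq_self fun u : 𝔼 d => (1 + ‖u‖ / l) ^ (-a)]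
  simpa [norm_smul, abs_of_pos hl, div_eq_inv_mul] using hscale

lemma div_rpow_mul_inv_pow_le {ρ l q : ℝ} {N : ℕ} (hl : 0 < l) (hlρ : l ≤ ρ) (hqN : q ≤ N) :
    (ρ / l) ^ q * (ρ ^ N)⁻¹ ≤ 2 ^ (N - q) * (l ^ N)⁻¹ * (1 + ρ / l) ^ (-(N - q)) := by
  have hρ : 0 < ρ := hl.trans_le hlρ
  have hone : 1 ≤ ρ / l := (one_le_div hl).2 hlρ
  calc (ρ / l) ^ q * (ρ ^ N)⁻¹ = (l ^ N)⁻¹ * (ρ / l) ^ (-(N - q)) := by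
        rw [neg_sub, Real.rpow_sub (by positivity), Real.rpow_natCast, div_pow]
        field_simp
    _ ≤ (l ^ N)⁻¹ * ((1 + ρ / l) / 2) ^ (-(N - q)) := by
      refine mul_le_mul_of_nonneg_left ?_ (by positivity)
      exact Real.rpow_le_rpow_of_nonpos (by positivity) (by linarith) (by linarith)
    _ = 2 ^ (N - q) * (l ^ N)⁻¹ * (1 + ρ / l) ^ (-(N - q)) := by
      rw [Real.div_rpow (by positivity) (by norm_num), Real.rpow_neg two_pos.le, div_inv_eq_mul]
      ring

lemma exists_abs_setIntegral_le_of_decay (d : ℕ) {N : ℕ} {q : ℝ} (hqN : q < N) :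
    ∃ C, 0 ≤ C ∧ ∀ {S : Set (𝔼 d)} {F : 𝔼 d → ℝ} {x : 𝔼 d} {l A : ℝ}, 0 < l → 0 ≤ A →
      (∀ᵐ u ∂volume.restrict S, l ≤ ‖u - x‖ ∧
        |F u| ≤ A * ((‖u - x‖ / l) ^ q * (‖u - x‖ ^ (d + N))⁻¹)) →
      |∫ u in S, F u| ≤ C * A * (l ^ N)⁻¹ := by
  set a : ℝ := (d + N : ℕ) - q
  have ha : d < a := by simp only [a]; push_cast; linarith
  refine ⟨2 ^ a * ∫ v : 𝔼 d, (1 + ‖v‖) ^ (-a), by positivity, ?_⟩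
  intro S F x l A hl hA hF
  set B := A * (2 ^ a * (l ^ (d + N))⁻¹)
  have hint : Integrable fun u : 𝔼 d => B * (1 + ‖u - x‖ / l) ^ (-a) :=
    (integrable_one_add_norm_sub_div_rpow x hl ha).const_mul B
  have hle : ∀ᵐ u ∂volume.restrict S, ‖F u‖ ≤ B * (1 + ‖u - x‖ / l) ^ (-a) := by
    filter_upwards [hF] with u ⟨hlu, hFu⟩
    rw [mul_assoc A]
    exact hFu.trans (mul_le_mul_of_nonneg_left
      (div_rpow_mul_inv_pow_le hl hlu (by push_cast; linarith)) hA)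
  calc |∫ u in S, F u| ≤ ∫ u in S, B * (1 + ‖u - x‖ / l) ^ (-a) :=
        norm_integral_le_of_norm_le hint.integrableOn hle
    _ ≤ ∫ u, B * (1 + ‖u - x‖ / l) ^ (-a) :=
        setIntegral_le_integral hint (ae_of_all _ fun u => by positivity)
    _ = (2 ^ a * ∫ v : 𝔼 d, (1 + ‖v‖) ^ (-a)) * A * (l ^ N)⁻¹ := by
      rw [integral_const_mul, integral_one_add_norm_sub_div_rpow x hl]
      simp only [B, pow_add]
      field_simp

namespace IsHomogeneousKernel

variable {K : 𝔼 d → ℝ}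

lemma integrableOn_smul_iteratedFDeriv (hK : IsHomogeneousKernel n K) {k : ℕ} (hk : k ≤ n + 1)
    {S : Set (𝔼 d)} (hS : MeasurableSet S) {G : 𝔼 d → ℝ} (hG : IntegrableOn G S) {y : 𝔼 d} {m : ℝ}
    (hm : 0 < m) (hfar : ∀ u ∈ S, m ≤ ‖y - u‖) :
    IntegrableOn (fun u => G u • iteratedFDeriv ℝ k K (y - u)) S := by
  obtain ⟨C, hC, hbound⟩ := hK.exists_norm_iteratedFDeriv_le hk
  have hne (u) (hu : u ∈ S) : y - u ≠ 0 := norm_pos_iff.1 (hm.trans_le (hfar u hu))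
  have hcont : ContinuousOn (fun u => iteratedFDeriv ℝ k K (y - u)) S := fun u hu =>
    ((hK.continuousAt_iteratedFDeriv hk (hne u hu)).comp (f := fun u => y - u)
      (by fun_prop)).continuousWithinAt
  refine hG.smul_bdd (C * (m ^ (d + k))⁻¹) (hcont.aestronglyMeasurable hS) ?_
  filter_upwards [ae_restrict_mem hS] with u hu
  refine (hbound _ (hne u hu)).trans ?_
  gcongr
  exact hfar u hu

lemma integrableOn_iteratedFDeriv_apply_mul (hK : IsHomogeneousKernel n K) {k : ℕ}
    (hk : k ≤ n + 1) {S : Set (𝔼 d)} (hS : MeasurableSet S) {G : 𝔼 d → ℝ} (hG : IntegrableOn G S)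
    {y : 𝔼 d} {m : ℝ} (hm : 0 < m) (hfar : ∀ u ∈ S, m ≤ ‖y - u‖) (h : Fin k → 𝔼 d) :
    IntegrableOn (fun u => iteratedFDeriv ℝ k K (y - u) h * G u) S := by
  refine ((ContinuousMultilinearMap.apply ℝ (fun _ : Fin k => 𝔼 d) ℝ h).integrable_comp
    (hK.integrableOn_smul_iteratedFDeriv hk hS hG hm hfar)).congr (ae_of_all _ fun u => ?_)
  exact mul_comm _ _

lemma integrableOn_mul (hK : IsHomogeneousKernel n K) {S : Set (𝔼 d)} (hS : MeasurableSet S)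
    {G : 𝔼 d → ℝ} (hG : IntegrableOn G S) {y : 𝔼 d} {m : ℝ} (hm : 0 < m)
    (hfar : ∀ u ∈ S, m ≤ ‖y - u‖) : IntegrableOn (fun u => K (y - u) * G u) S :=
  hK.integrableOn_iteratedFDeriv_apply_mul (Nat.zero_le _) hS hG hm hfar 0

lemma integrableOn_taylorSum_mul (hK : IsHomogeneousKernel n K) {S : Set (𝔼 d)}
    (hS : MeasurableSet S) {G : 𝔼 d → ℝ} (hG : IntegrableOn G S) {x : 𝔼 d} {m : ℝ} (hm : 0 < m)
    (hfar : ∀ u ∈ S, m ≤ ‖x - u‖) (h : 𝔼 d) :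
    IntegrableOn (fun u => taylorSum n K (x - u) h * G u) S := by
  simp only [taylorSum, Finset.sum_mul, mul_assoc]
  exact integrable_finsetSum _ fun k hk => (hK.integrableOn_iteratedFDeriv_apply_mul
    (Finset.mem_range.1 hk).le hS hG hm hfar _).const_mul _

lemma integral_taylorSum_mul_mem (hK : IsHomogeneousKernel n K) {S : Set (𝔼 d)}
    (hS : MeasurableSet S) {G : 𝔼 d → ℝ} (hG : IntegrableOn G S) {x : 𝔼 d} {m : ℝ} (hm : 0 < m)
    (hfar : ∀ u ∈ S, m ≤ ‖x - u‖) :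
    (fun y => ∫ u in S, taylorSum n K (x - u) (y - x) * G u) ∈ PolyLE d n := by
  have hsum : (fun y => ∫ u in S, taylorSum n K (x - u) (y - x) * G u) =
      ∑ k ∈ Finset.range (n + 1), (k.factorial : ℝ)⁻¹ • fun y =>
        (∫ u in S, G u • iteratedFDeriv ℝ k K (x - u)) fun _ => y - x := by
    ext y
    simp only [taylorSum, Finset.sum_mul, mul_assoc, Finset.sum_apply, Pi.smul_apply, smul_eq_mul]
    rw [integral_finsetSum _ fun k hk => (hK.integrableOn_iteratedFDeriv_apply_mul
      (Finset.mem_range.1 hk).le hS hG hm hfar _).const_mul _]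
    refine Finset.sum_congr rfl fun k hk => ?_
    rw [integral_const_mul, ContinuousMultilinearMap.integral_apply
      (hK.integrableOn_smul_iteratedFDeriv (Finset.mem_range.1 hk).le hS hG hm hfar)]
    simp [mul_comm]
  rw [hsum]
  exact PolyLE.sum_mem fun k hk => PolyLE.smul_mem _
    (PolyLE.multilinear_apply_sub_mem (Finset.mem_range_succ_iff.1 hk) _ x)

lemma exists_abs_sub_taylorSum_le_of_mem_cube (hK : IsHomogeneousKernel n K) :
    ∃ C, 0 ≤ C ∧ ∀ {x y u : 𝔼 d} {l : ℝ}, 0 < l → u ∉ cube x (2 * l) → y ∈ cube x l →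
      |K (y - u) - taylorSum n K (x - u) (y - x)| ≤
        C * l ^ (n + 1) * (‖u - x‖ ^ (d + (n + 1)))⁻¹ := by
  obtain ⟨C, hC, htaylor⟩ := hK.exists_abs_sub_taylorSum_le
  refine ⟨C * (2 * d + 1) ^ (d + (n + 1)) * d ^ (n + 1), by positivity, ?_⟩
  intro x y u l hl hu hy
  have hux : 0 < ‖u - x‖ := hl.trans_le (le_norm_sub_of_notMem_cube hu)
  have hyx : ‖y - x‖ ≤ d * l := mem_closedBall_iff_norm.1 (cube_subset_closedBall x hl.le hy)
  have hremainder := htaylor (x - u) (y - x) (‖u - x‖ / (2 * d + 1)) (by positivity) fun t ht =>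
    (div_le_iff₀' (by positivity)).2 (norm_sub_le_mul_norm_sub_add_smul hl.le hu hy ht)
  rw [sub_add_sub_cancel'] at hremainder
  calc |K (y - u) - taylorSum n K (x - u) (y - x)|
      ≤ C * ((‖u - x‖ / (2 * d + 1)) ^ (d + (n + 1)))⁻¹ * ‖y - x‖ ^ (n + 1) := hremainder
    _ ≤ C * ((‖u - x‖ / (2 * d + 1)) ^ (d + (n + 1)))⁻¹ * (d * l) ^ (n + 1) := by gcongr
    _ = _ := by
      rw [div_pow, mul_pow, inv_div]
      ring

lemma exists_potential_approx (hK : IsHomogeneousKernel n K) {q : ℝ} (hq : q < n + 1) :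
    ∃ C, 0 ≤ C ∧ ∀ {S : Set (𝔼 d)} {G : 𝔼 d → ℝ} {x : 𝔼 d} {l A : ℝ}, 0 < l → 0 ≤ A →
      MeasurableSet S → Disjoint S (cube x (2 * l)) → IntegrableOn G S →
      (∀ᵐ u ∂volume.restrict S, |G u| ≤ A * (‖u - x‖ / l) ^ q) →
      (∀ y ∈ cube x l, IntegrableOn (fun u => K (y - u) * G u) S) ∧
      ∃ P ∈ PolyLE d n, ∀ y ∈ cube x l, |(∫ u in S, K (y - u) * G u) - P y| ≤ C * A := by
  obtain ⟨C₁, hC₁, htaylor⟩ := hK.exists_abs_sub_taylorSum_le_of_mem_cube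
  obtain ⟨C₂, hC₂, hdecay⟩ := exists_abs_setIntegral_le_of_decay d (N := n + 1) (mod_cast hq)
  refine ⟨C₂ * C₁, by positivity, ?_⟩
  intro S G x l A hl hA hS hdisj hG hGle
  have hnot (u) (hu : u ∈ S) : u ∉ cube x (2 * l) := disjoint_left.1 hdisj hu
  have hfar (y) (hy : y ∈ cube x l) (u) (hu : u ∈ S) : l / (2 * d + 1) ≤ ‖y - u‖ := by
    have := norm_sub_le_mul_norm_sub_add_smul hl.le (hnot u hu) hy ⟨zero_le_one, le_rfl⟩
    rw [one_smul, sub_add_sub_cancel'] at this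
    exact (div_le_iff₀' (by positivity)).2 ((le_norm_sub_of_notMem_cube (hnot u hu)).trans this)
  have hm : 0 < l / (2 * d + 1) := by positivity
  have hfar_centre := hfar x (mem_cube_self x hl.le)
  have hint (y) (hy : y ∈ cube x l) := hK.integrableOn_mul hS hG hm (hfar y hy)
  refine ⟨hint, _, hK.integral_taylorSum_mul_mem hS hG hm hfar_centre, fun y hy => ?_⟩
  have hintegrand : ∀ᵐ u ∂volume.restrict S, l ≤ ‖u - x‖ ∧
      |K (y - u) * G u - taylorSum n K (x - u) (y - x) * G u| ≤
        C₁ * l ^ (n + 1) * A * ((‖u - x‖ / l) ^ q * (‖u - x‖ ^ (d + (n + 1)))⁻¹) := by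
    filter_upwards [hGle, ae_restrict_mem hS] with u hGu hu
    refine ⟨le_norm_sub_of_notMem_cube (hnot u hu), ?_⟩
    rw [← sub_mul, abs_mul]
    exact (mul_le_mul (htaylor hl (hnot u hu) hy) hGu (abs_nonneg _)
      (by positivity)).trans_eq (by ring)
  rw [← integral_sub (hint y hy) (hK.integrableOn_taylorSum_mul hS hG hm hfar_centre _)]
  exact (hdecay hl (by positivity) hintegrand).trans_eq (by field_simp)

end IsHomogeneousKernel

/-! ### Local approximation from the seminorm -/

section Seminorm

variable {D : Set (𝔼 d)} {f P : 𝔼 d → ℝ} {ω : ℝ → ℝ} {x z : 𝔼 d} {l t M C₀ : ℝ}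

lemma isApproxOn_of_lintegral_le {E : ℝ} (hP : P ∈ PolyLE d n) (ht : 0 < t)
    (hf : IntegrableOn f (cube z t)) (hE : 0 ≤ E)
    (h : ∫⁻ y in cube z t, ENNReal.ofReal |f y - P y| ≤ ENNReal.ofReal (E * t ^ d)) :
    IsApproxOn n f E z t P where
  mem := hP
  side_pos := ht
  integrableOn := hf
  integral_le := by
    have hsub : IntegrableOn (fun y => f y - P y) (cube z t) :=
      hf.sub (PolyLE.integrableOn hP (isCompact_cube z ht.le).isBounded)
    rwa [← ofReal_integral_eq_lintegral_ofReal hsub.abs (ae_of_all _ fun _ => abs_nonneg _),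
      ENNReal.ofReal_le_ofReal_iff (by positivity)] at h

lemma exists_isApproxOn_of_zygSeminorm_lt (hM : zygSeminorm ω n D f < ENNReal.ofReal M)
    (hω : 0 ≤ ω t) (hf : IntegrableOn f D) (ht : 0 < t) (hz : cube z t ⊆ D) :
    ∃ P, IsApproxOn n f (M * ω t) z t P := by
  have hM₀ : 0 < M := ENNReal.ofReal_pos.1 (pos_of_gt hM)
  have hinf : (⨅ (P : 𝔼 d → ℝ) (_ : P ∈ PolyLE d n), (ENNReal.ofReal (ω t * t ^ d))⁻¹ *
      ∫⁻ x in cube z t, ENNReal.ofReal |f x - P x|) < ENNReal.ofReal M := by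
    refine lt_of_le_of_lt ?_ hM
    unfold zygSeminorm
    exact le_iSup_of_le z (le_iSup_of_le t (le_iSup_of_le ht (le_iSup_of_le hz le_rfl)))
  simp only [iInf_lt_iff] at hinf
  obtain ⟨P, hP, hlt⟩ := hinf
  refine ⟨P, isApproxOn_of_lintegral_le hP ht (hf.mono_set hz) (by positivity) ?_⟩
  rw [mul_comm, ← div_eq_mul_inv] at hlt
  rw [mul_assoc, ENNReal.ofReal_mul hM₀.le]
  exact (ENNReal.div_le_iff_le_mul (.inr ENNReal.ofReal_ne_top)
    (.inl ENNReal.ofReal_ne_top)).1 hlt.le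

lemma IsNearBestApprox.isApproxOn (h : IsNearBestApprox ω n D f C₀ z t P) (hC₀ : 0 ≤ C₀)
    (hω : 0 ≤ ω t) (hf : IntegrableOn f (cube z t)) (hfin : zygSeminorm ω n D f < ⊤) (ht : 0 < t) :
    IsApproxOn n f (C₀ * (zygSeminorm ω n D f).toReal * ω t) z t P := by
  refine isApproxOn_of_lintegral_le h.1 ht hf (by positivity) ?_
  have hle := h.2
  rw [mul_comm (ENNReal.ofReal _)⁻¹, ← div_eq_mul_inv,
    ENNReal.div_le_iff_le_mul (.inl (by positivity)) (.inl ENNReal.ofReal_ne_top)] at hle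
  rwa [mul_right_comm C₀, ENNReal.ofReal_mul (by positivity), ENNReal.ofReal_mul (by positivity),
    ENNReal.ofReal_toReal hfin.ne]

lemma isApproxOn_zero_of_integral_abs_eq_zero (hf : IntegrableOn f D) (h : ∫ y in D, |f y| = 0)
    (ht : 0 < t) (hz : cube z t ⊆ D) : IsApproxOn n f 0 z t 0 := by
  refine isApproxOn_zero n ht (hf.mono_set hz) ?_
  rw [zero_mul, ← h]
  exact setIntegral_mono_set hf.abs (ae_of_all _ fun _ => abs_nonneg _) hz.eventuallyLE

lemma zygmundBound_add (hω : ∀ ⦃t⦄, 0 < t → 0 ≤ ω t) (hf : IntegrableOn f D)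
    (hfin : zygSeminorm ω n D f < ⊤) :
    ZygmundBound ω n D f ((zygSeminorm ω n D f).toReal + ∫ y in D, |f y|) := by
  have hN : 0 ≤ (zygSeminorm ω n D f).toReal := ENNReal.toReal_nonneg
  have hF : 0 ≤ ∫ y in D, |f y| := integral_nonneg fun _ => abs_nonneg _
  refine ⟨by positivity, hf, by linarith, fun z t ht hz => ?_⟩
  rcases hF.eq_or_lt' with hF₀ | hFpos
  · exact ⟨0, (isApproxOn_zero_of_integral_abs_eq_zero hf hF₀ ht hz).mono
      (mul_nonneg (by positivity) (hω ht))⟩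
  · refine exists_isApproxOn_of_zygSeminorm_lt ?_ (hω ht) hf ht hz
    rw [ENNReal.lt_ofReal_iff_toReal_lt hfin.ne]
    linarith

lemma ZygmundBound.mono {M' : ℝ} (h : ZygmundBound ω n D f M) (hω : ∀ ⦃t⦄, 0 < t → 0 ≤ ω t)
    (hM : M ≤ M') : ZygmundBound ω n D f M' where
  nonneg := h.nonneg.trans hM
  integrableOn := h.integrableOn
  integral_abs_le := h.integral_abs_le.trans hM
  exists_isApproxOn z t ht hz :=
    let ⟨P, hP⟩ := h.exists_isApproxOn z t ht hz
    ⟨P, hP.mono (mul_le_mul_of_nonneg_right hM (hω ht))⟩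

end Seminorm

/-! ### Functions that are locally polynomial -/

lemma IsApproxOn.ae_eq {f P : 𝔼 d → ℝ} {z : 𝔼 d} {t : ℝ} (h : IsApproxOn n f 0 z t P) :
    f =ᵐ[volume.restrict (cube z t)] P := by
  have hzero : ∫ y in cube z t, |f y - P y| = 0 :=
    le_antisymm (by simpa using h.integral_le) (integral_nonneg fun _ => abs_nonneg _)
  filter_upwards [(integral_eq_zero_iff_of_nonneg (fun _ => abs_nonneg _)
    h.integrableOn_abs_sub).1 hzero] with y hy
  exact sub_eq_zero.1 (abs_eq_zero.1 hy)

lemma PolyLE.ae_eq_of_isPreconnected {D V : Set (𝔼 d)} {f P : 𝔼 d → ℝ} (hD : IsPreconnected D)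
    (hloc : ∀ z ∈ D, ∃ W, IsOpen W ∧ z ∈ W ∧ ∃ Q ∈ PolyLE d n, f =ᵐ[volume.restrict W] Q)
    (hP : P ∈ PolyLE d n) (hV : IsOpen V) (hVD : (D ∩ V).Nonempty)
    (hfP : f =ᵐ[volume.restrict V] P) : f =ᵐ[volume.restrict D] P := by
  set 𝒱 : Set (Set (𝔼 d)) := {W | IsOpen W ∧ f =ᵐ[volume.restrict W] P}
  have hcl : closure (⋃₀ 𝒱) ∩ D ⊆ ⋃₀ 𝒱 := by
    rintro z ⟨hz, hzD⟩
    obtain ⟨W, hW, hzW, Q, hQ, hfQ⟩ := hloc z hzD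
    obtain ⟨y, hyW, V', ⟨hV', hfV'⟩, hyV'⟩ := mem_closure_iff.1 hz W hW hzW
    have hQP : Q = P := by
      refine eq_of_ae_eq_on_open hQ hP (hW.inter hV') ⟨y, hyW, hyV'⟩ ?_
      filter_upwards [ae_restrict_of_ae_restrict_of_subset inter_subset_left hfQ,
        ae_restrict_of_ae_restrict_of_subset inter_subset_right hfV'] with w hwQ hwP
      exact hwQ.symm.trans hwP
    exact ⟨W, ⟨hW, hQP ▸ hfQ⟩, hzW⟩
  have hsub : D ⊆ ⋃₀ 𝒱 := hD.subset_of_closure_inter_subset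
    (isOpen_sUnion fun _ hW => hW.1)
    (hVD.mono (inter_subset_inter_right D (subset_sUnion_of_mem ⟨hV, hfP⟩))) hcl
  obtain ⟨𝒯, h𝒯, h𝒯𝒱, hunion⟩ :=
    TopologicalSpace.isOpen_sUnion_countable 𝒱 fun _ hW => hW.1
  refine ae_restrict_of_ae_restrict_of_subset (hsub.trans hunion.ge) ?_
  rw [sUnion_eq_biUnion, ae_restrict_biUnion_iff _ h𝒯]
  exact fun W hW => (h𝒯𝒱 hW).2

lemma ZygmundBound.ae_eq_of_eq_zero {ω : ℝ → ℝ} {D : Set (𝔼 d)} {f P : 𝔼 d → ℝ} {M l : ℝ}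
    {x : 𝔼 d} (hf : ZygmundBound ω n D f M) (hω : ∀ t, 0 < t → ω t = 0) (hD : IsOpen D)
    (hconn : IsPreconnected D) (hx : x ∈ D) (hP : IsApproxOn n f (M * ω l) x l P) :
    f =ᵐ[volume.restrict D] P := by
  have ae_eq_ball {z t Q} (hQ : IsApproxOn n f (M * ω t) z t Q) :
      f =ᵐ[volume.restrict (ball z (t / 2))] Q := by
    rw [hω t hQ.side_pos, mul_zero] at hQ
    exact ae_restrict_of_ae_restrict_of_subset
      (ball_subset_closedBall.trans (closedBall_subset_cube z t)) hQ.ae_eq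
  refine PolyLE.ae_eq_of_isPreconnected hconn (fun z hz => ?_) hP.mem isOpen_ball
    ⟨x, hx, mem_ball_self (half_pos hP.side_pos)⟩ (ae_eq_ball hP)
  obtain ⟨t, ht, hzt⟩ := exists_cube_subset_of_isOpen hD hz
  obtain ⟨Q, hQ⟩ := hf.exists_isApproxOn z t ht hzt
  exact ⟨_, isOpen_ball, mem_ball_self (half_pos ht), Q, hQ.mem, ae_eq_ball hQ⟩

/-! ### The far part of the singular integral -/

lemma IsPowerModulus.exists_ae_abs_sub_le_of_notMem_cube {ω : ℝ → ℝ} {q r K L T : ℝ}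
    {D : Set (𝔼 d)} (hω : IsPowerModulus ω n q r K) (hD : IsOpen D) (hconn : IsPreconnected D)
    (hbdd : Bornology.IsBounded D) (hcones : HasCones D L T) :
    ∃ C, 0 ≤ C ∧ ∀ {f M x l P}, ZygmundBound ω n D f M → x ∈ D →
      IsApproxOn n f (M * ω l) x l P →
      ∀ᵐ u ∂volume.restrict (D \ cube x (2 * l)),
        |f u - P u| ≤ C * (M * ω l) * (‖u - x‖ / l) ^ q := by
  rcases hω.pos_or_eq_zero with hpos | hzero
  · obtain ⟨C, hC, hle⟩ := hω.exists_ae_abs_sub_le hpos hD.measurableSet hcones hbdd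
    refine ⟨C, hC, fun {f M x l P} hf hx hP => ?_⟩
    filter_upwards [ae_restrict_of_ae_restrict_of_subset sdiff_subset (hle hf),
      ae_restrict_mem (hD.measurableSet.diff (measurableSet_cube x (2 * l)))] with u hu hmem
    exact hu x l P hx hP (le_norm_sub_of_notMem_cube hmem.2)
  · refine ⟨0, le_rfl, fun {f M x l P} hf hx hP => ?_⟩
    filter_upwards [ae_restrict_of_ae_restrict_of_subset sdiff_subset
      (hf.ae_eq_of_eq_zero hzero hD hconn hx hP)] with u hu
    simp [hu]

theorem statement_19_general {ω : ℝ → ℝ} {q r B L T C₀ : ℝ} (hω : IsPowerModulus ω n q r B)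
    {D : Set (𝔼 d)} (hD : IsOpen D) (hconn : IsPreconnected D) (hbdd : Bornology.IsBounded D)
    (hcones : HasCones D L T) {K : 𝔼 d → ℝ} (hK : IsHomogeneousKernel n K) (hC₀ : 0 ≤ C₀) :
    ∃ C : ℝ, 0 < C ∧ ∀ f : 𝔼 d → ℝ, IntegrableOn f D → zygSeminorm ω n D f < ⊤ →
      ∀ (x₀ : 𝔼 d) (l : ℝ), 0 < l → cube x₀ (2 * l) ⊆ D →
        ∀ P : 𝔼 d → ℝ, IsNearBestApprox ω n D f C₀ x₀ l P →
          (∀ y ∈ cube x₀ l,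
            IntegrableOn (fun u => K (y - u) * (f u - P u)) (D \ cube x₀ (2 * l))) ∧
          ∃ P₃ ∈ PolyLE d n,
            (ENNReal.ofReal (l ^ d))⁻¹ * ∫⁻ y in cube x₀ l, ENNReal.ofReal
                |(∫ u in D \ cube x₀ (2 * l), K (y - u) * (f u - P u)) - P₃ y| ≤
              ENNReal.ofReal (C * ω l * ((zygSeminorm ω n D f).toReal + ∫ x in D, |f x|)) := by
  obtain ⟨C₁, hC₁, hgrowth⟩ := hω.exists_ae_abs_sub_le_of_notMem_cube hD hconn hbdd hcones
  obtain ⟨C₂, hC₂, hpotential⟩ := hK.exists_potential_approx hω.q_lt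
  refine ⟨C₂ * (C₁ * (C₀ + 1)) + 1, by positivity, fun f hf hfin x l hl hQ P hP => ?_⟩
  have hωl : 0 ≤ ω l := hω.nonneg hl
  have hQl : cube x l ⊆ D := (cube_subset_cube (by rw [sub_self, norm_zero]; linarith)).trans hQ
  have hbound := zygmundBound_add hω.nonneg hf hfin
  set N := (zygSeminorm ω n D f).toReal + ∫ x in D, |f x|
  have hN : 0 ≤ N := hbound.nonneg
  have hP' : IsApproxOn n f ((C₀ + 1) * N * ω l) x l P := by
    refine (hP.isApproxOn hC₀ hωl (hf.mono_set hQl) hfin hl).mono ?_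
    gcongr
    · linarith
    · exact le_add_of_nonneg_right (integral_nonneg fun _ => abs_nonneg _)
  have hfP : IntegrableOn (fun u => f u - P u) (D \ cube x (2 * l)) :=
    (hf.sub (PolyLE.integrableOn hP.1 hbdd)).mono_set sdiff_subset
  obtain ⟨hint, P₃, hP₃, happrox⟩ := hpotential hl (by positivity)
    (hD.measurableSet.diff (measurableSet_cube x (2 * l))) disjoint_sdiff_left hfP
    (hgrowth (hbound.mono hω.nonneg (by nlinarith : N ≤ (C₀ + 1) * N))
      (hQl (mem_cube_self x hl.le)) hP')
  refine ⟨hint, P₃, hP₃, (inv_volume_mul_lintegral_cube_le hl happrox).trans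
    (ENNReal.ofReal_le_ofReal ?_)⟩
  have : 0 ≤ ω l * N := by positivity
  linarith

end Development

/-- **The far part.** For `f₃ = (f - P_Q) χ_{D∖2Q}`, the function
`g(y) = ∫_{D∖2Q} K(y-u) (f(u) - P_Q(u)) du` is well defined on `Q` and admits a
polynomial `P₃ ∈ 𝒫_n` with average deviation on `Q` at most `C ω(ℓ) ‖f‖`. -/
theorem statement_19 {d n : ℕ} (ω : ℝ → ℝ) (hω : IsModulusOfOrder ω n)
    (D : Set (EuclideanSpace ℝ (Fin d))) (hD : IsLipschitzDomain D)
    (Ω K : EuclideanSpace ℝ (Fin d) → ℝ)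
    (hΩ : IsCZDensity d ((n : ℕ∞) + 1) Ω)
    (hK : K = fun x => Ω x / ‖x‖ ^ d)
    (C₀ : ℝ) (hC₀ : 0 < C₀) :
    ∃ C : ℝ, 0 < C ∧
      ∀ f : EuclideanSpace ℝ (Fin d) → ℝ,
        LocallyIntegrableOn f D → IntegrableOn f D → zygSeminorm ω n D f < ⊤ →
        ∀ (x₀ : EuclideanSpace ℝ (Fin d)) (l : ℝ), 0 < l → cube x₀ (2 * l) ⊆ D →
          ∀ P : EuclideanSpace ℝ (Fin d) → ℝ,
            IsNearBestApprox ω n D f C₀ x₀ l P →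
            (∀ y ∈ cube x₀ l,
              IntegrableOn (fun u => K (y - u) * (f u - P u))
                (D \ cube x₀ (2 * l))) ∧
            ∃ P₃ ∈ PolyLE d n,
              (ENNReal.ofReal (l ^ d))⁻¹ *
                  ∫⁻ y in cube x₀ l, ENNReal.ofReal
                    |(∫ u in D \ cube x₀ (2 * l), K (y - u) * (f u - P u)) - P₃ y| ≤
                ENNReal.ofReal (C * ω l *
                  ((zygSeminorm ω n D f).toReal + ∫ x in D, |f x|)) := by
  subst hK
  obtain ⟨q, r, B, hpower⟩ := hω.exists_isPowerModulus
  obtain ⟨L, T, hcones⟩ := hD.exists_hasCones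
  obtain ⟨C, hC, hfar⟩ := statement_19_general hpower hD.1 hD.2.1.isPreconnected hD.2.2.1 hcones
    hΩ.isHomogeneousKernel hC₀.le
  exact ⟨C, hC, fun f _ => hfar f⟩

end
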